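/- arXiv:2002.02128 — 6 statements merged into one kernel-verified Lean document; each statement's English description precedes it below -/
import Mathlib

section
/- Let R be a commutative ring and A a commutative R-algebra such that A is a stably polynomial algebra over R, i.e., for some m, n ∈ ℕ the polynomial ring A[Z₁,…,Z_m] in m variables over A is isomorphic as an R-algebra to a polynomial ring in n + m variables over R. Then Ω_R(A) is a stably free A-module. -/
open TensorProduct

noncomputable section

/-- The residue field `κ(P) = R_P / P R_P` of a commutative ring `R` at a prime ideal `P`. -/
abbrev ResidueFieldAt (R : Type*) [CommRing R] (P : Ideal R) [P.IsPrime] : Type _ :=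
  IsLocalRing.ResidueField (Localization.AtPrime P)

/-- `A ⊗_R κ(P)` is a polynomial ring in `n` variables over `B ⊗_R κ(P)`
for every prime ideal `P` of `R`. -/
def FibersPolynomialOver (R B A : Type*) [CommRing R] [CommRing B] [CommRing A]
    [Algebra R B] [Algebra R A] [Algebra B A] [IsScalarTower R B A] (n : ℕ) : Prop :=
  ∀ (P : Ideal R) (_ : P.IsPrime),
    letI : Algebra (ResidueFieldAt R P ⊗[R] B) (ResidueFieldAt R P ⊗[R] A) :=
      (Algebra.TensorProduct.map (AlgHom.id R (ResidueFieldAt R P))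
        (IsScalarTower.toAlgHom R B A)).toRingHom.toAlgebra
    Nonempty ((ResidueFieldAt R P ⊗[R] A) ≃ₐ[ResidueFieldAt R P ⊗[R] B]
      MvPolynomial (Fin n) (ResidueFieldAt R P ⊗[R] B))

/-- `A` is an `𝔸ⁿ`-fibration over `R`: a finitely generated flat `R`-algebra all of whose
fibres are polynomial rings in `n` variables. -/
def IsAffineFibration (R A : Type*) [CommRing R] [CommRing A] [Algebra R A] (n : ℕ) : Prop :=
  Algebra.FiniteType R A ∧ Module.Flat R A ∧
  ∀ (P : Ideal R) (_ : P.IsPrime),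
    Nonempty ((ResidueFieldAt R P ⊗[R] A) ≃ₐ[ResidueFieldAt R P]
      MvPolynomial (Fin n) (ResidueFieldAt R P))

/-- `W` is an `m`-tuple residual variable of the `𝔸ⁿ`-fibration `A` over `R`. -/
def IsResidualVariable (R A : Type*) [CommRing R] [CommRing A] [Algebra R A]
    (n m : ℕ) (W : Fin m → A) : Prop :=
  AlgebraicIndependent R W ∧
  FibersPolynomialOver R (Algebra.adjoin R (Set.range W)) A (n - m)

/-- A module `M` over `A` is stably free if `M ⊕ Aˢ ≅ Aᵗ` for some `s, t`. -/
def IsStablyFree (A M : Type*) [CommRing A] [AddCommGroup M] [Module A M] : Prop :=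
  ∃ s t : ℕ, Nonempty ((M × (Fin s → A)) ≃ₗ[A] (Fin t → A))

end

/-- The Kähler differentials of an algebra isomorphic to a polynomial ring are free. -/
theorem kaehler_free_of_algEquiv {R B σ : Type*} [CommRing R] [CommRing B] [Algebra R B]
    (e : B ≃ₐ[R] MvPolynomial σ R) :
    Nonempty (KaehlerDifferential R B ≃ₗ[B] (σ →₀ B)) := by
  letI : Algebra (MvPolynomial σ R) B := e.symm.toRingEquiv.toRingHom.toAlgebra
  haveI : IsScalarTower R (MvPolynomial σ R) B :=
    IsScalarTower.of_algebraMap_eq fun r => (e.symm.commutes r).symm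
  let e' : MvPolynomial σ R ≃ₐ[MvPolynomial σ R] B :=
    AlgEquiv.ofRingEquiv (f := e.symm.toRingEquiv) (fun _ => rfl)
  haveI : Algebra.FormallyEtale (MvPolynomial σ R) B := Algebra.FormallyEtale.of_equiv e'
  let b := (KaehlerDifferential.mvPolynomialBasis R σ).baseChange B
  exact ⟨(KaehlerDifferential.tensorKaehlerEquivOfFormallyEtale R
    (MvPolynomial σ R) B).symm.trans b.repr⟩

/-- The split cotangent sequence for `R → A → A[Z]`. -/
theorem kaehler_mvPolynomial_split (R A σ : Type*) [CommRing R] [CommRing A] [Algebra R A] :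
    Nonempty (KaehlerDifferential R (MvPolynomial σ A) ≃ₗ[MvPolynomial σ A]
      (MvPolynomial σ A ⊗[A] KaehlerDifferential R A) × (σ →₀ MvPolynomial σ A)) := by
  have hinj : Function.Injective
      (KaehlerDifferential.mapBaseChange R A (MvPolynomial σ A)) := by
    rw [injective_iff_map_eq_zero]
    intro x hx
    obtain ⟨y, rfl⟩ := (Algebra.H1Cotangent.exact_δ_mapBaseChange R A (MvPolynomial σ A) x).mp hx
    rw [Subsingleton.elim y 0, map_zero]
  have hex := KaehlerDifferential.exact_mapBaseChange_map R A (MvPolynomial σ A)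
  have hsurj := KaehlerDifferential.map_surjective R A (MvPolynomial σ A)
  haveI : Module.Free (MvPolynomial σ A) (KaehlerDifferential A (MvPolynomial σ A)) :=
    Module.Free.of_basis (KaehlerDifferential.mvPolynomialBasis A σ)
  obtain ⟨l, hl⟩ := Module.projective_lifting_property _ LinearMap.id hsurj
  exact ⟨(hex.splitSurjectiveEquiv hinj ⟨l, hl⟩).1.trans
    ((LinearEquiv.refl _ _).prodCongr (KaehlerDifferential.mvPolynomialEquiv A σ))⟩

/-- If `A` is a stably polynomial algebra over `R` (i.e. `A[Z₁,…,Z_m] ≅ R^[n+m]` as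
`R`-algebras for some `m, n`), then the module of Kähler differentials `Ω_R(A)` is a
stably free `A`-module. -/
theorem kaehler_stablyFree_of_stablyPolynomial
    (R A : Type*) [CommRing R] [CommRing A] [Algebra R A]
    (h : ∃ m n : ℕ,
      Nonempty (MvPolynomial (Fin m) A ≃ₐ[R] MvPolynomial (Fin (n + m)) R)) :
    IsStablyFree A (KaehlerDifferential R A) := by
  obtain ⟨m, n, ⟨e⟩⟩ := h
  obtain ⟨f⟩ := kaehler_free_of_algEquiv e
  obtain ⟨g⟩ := kaehler_mvPolynomial_split R A (Fin m)
  refine ⟨m, n + m, ?_⟩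
  letI : Algebra (MvPolynomial (Fin m) A) A :=
    (MvPolynomial.aeval (R := A) (fun _ : Fin m => (0 : A))).toRingHom.toAlgebra
  haveI : IsScalarTower A (MvPolynomial (Fin m) A) A :=
    IsScalarTower.of_algebraMap_eq fun r =>
      ((MvPolynomial.aeval (R := A) (fun _ : Fin m => (0 : A))).commutes r).symm
  let B := MvPolynomial (Fin m) A
  let h1 : A ⊗[B] ((B ⊗[A] KaehlerDifferential R A) × (Fin m →₀ B)) ≃ₗ[A]
      A ⊗[B] (Fin (n + m) →₀ B) := LinearEquiv.baseChange B A _ _ (g.symm.trans f)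
  let h2 : A ⊗[B] ((B ⊗[A] KaehlerDifferential R A) × (Fin m →₀ B)) ≃ₗ[A]
      (A ⊗[B] (B ⊗[A] KaehlerDifferential R A)) × (A ⊗[B] (Fin m →₀ B)) :=
    TensorProduct.prodRight B A A _ _
  let h3 : A ⊗[B] (B ⊗[A] KaehlerDifferential R A) ≃ₗ[A] KaehlerDifferential R A :=
    (TensorProduct.AlgebraTensorModule.cancelBaseChange A B A A _).trans (TensorProduct.lid A _)
  let k (j : ℕ) : A ⊗[B] (Fin j →₀ B) ≃ₗ[A] (Fin j → A) :=
    ((Finsupp.basisSingleOne (R := B) (ι := Fin j)).baseChange A).equivFun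
  exact ⟨(h3.prodCongr (k m)).symm.trans (h2.symm.trans (h1.trans (k (n + m))))⟩
end

section
/- Let R be a commutative ring, A a commutative R-algebra, B₁ and B₂ R-subalgebras of A, and B the R-subalgebra of A generated by B₁ ∪ B₂. Suppose that for every prime ideal P of R, A ⊗_R κ(P) is isomorphic, as a (B ⊗_R κ(P))-algebra, to a polynomial ring in n variables over B ⊗_R κ(P). Then for every prime ideal Q of B₂, A ⊗_{B₂} κ(Q) is isomorphic, as a (B ⊗_{B₂} κ(Q))-algebra, to a polynomial ring in n variables over B ⊗_{B₂} κ(Q). -/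
open TensorProduct

/-- Polynomial rings are stable under pushout. -/
theorem mvPolynomial_of_isPushout {S S' T T' : Type*} [CommRing S] [CommRing S'] [CommRing T]
    [CommRing T'] [Algebra S S'] [Algebra S T] [Algebra S T'] [Algebra S' T'] [Algebra T T']
    [IsScalarTower S S' T'] [IsScalarTower S T T'] (hp : Algebra.IsPushout S S' T T') {n : ℕ}
    (e : T ≃ₐ[S] MvPolynomial (Fin n) S) :
    Nonempty (T' ≃ₐ[S'] MvPolynomial (Fin n) S') :=
  ⟨(Algebra.IsPushout.equiv S S' T T').symm.trans
    ((Algebra.TensorProduct.congr (AlgEquiv.refl : S' ≃ₐ[S'] S') e).trans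
      (MvPolynomial.algebraTensorAlgEquiv S S'))⟩

attribute [local instance] Algebra.TensorProduct.rightAlgebra in
/-- `K ⊗ A` is the pushout of `K ⊗ B` along `B → A`. -/
theorem isPushout_tensor_aux (R B A K : Type*) [CommRing R] [CommRing B] [CommRing A] [CommRing K]
    [Algebra R B] [Algebra R A] [Algebra B A] [IsScalarTower R B A] [Algebra R K]
    [Algebra (K ⊗[R] B) (K ⊗[R] A)]
    (hm : algebraMap (K ⊗[R] B) (K ⊗[R] A) = (Algebra.TensorProduct.map (AlgHom.id R K)
        (IsScalarTower.toAlgHom R B A)).toRingHom)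
    [Algebra B (K ⊗[R] A)] [IsScalarTower B A (K ⊗[R] A)]
    [IsScalarTower B (K ⊗[R] B) (K ⊗[R] A)] :
    Algebra.IsPushout B (K ⊗[R] B) A (K ⊗[R] A) := by
  have : IsScalarTower K (K ⊗[R] B) (K ⊗[R] A) := .of_algebraMap_eq fun x => by
    rw [hm]; simp [Algebra.TensorProduct.algebraMap_apply]
  have : IsScalarTower R (K ⊗[R] B) (K ⊗[R] A) := .of_algebraMap_eq fun x => by
    rw [hm]; exact ((Algebra.TensorProduct.map (AlgHom.id R K)
        (IsScalarTower.toAlgHom R B A)).commutes x).symm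
  have h1 : Algebra.IsPushout R A K (K ⊗[R] A) := inferInstance
  exact ((Algebra.IsPushout.comp_iff (T := A) R B K (K ⊗[R] B)).mp h1).symm

attribute [local instance] Algebra.TensorProduct.rightAlgebra in
/-- The base change argument, for arbitrary coefficient rings in place of residue fields. -/
theorem polynomial_base_change_aux (R B₂ B A k K : Type*) [CommRing R] [CommRing B₂] [CommRing B]
    [CommRing A] [CommRing k] [CommRing K]
    [Algebra R B] [Algebra R A] [Algebra B A] [IsScalarTower R B A] [Algebra R k]
    [Algebra B₂ B] [Algebra B₂ A] [IsScalarTower B₂ B A] [Algebra B₂ K]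
    (g : R →+* B₂) (hg : (algebraMap B₂ B).comp g = algebraMap R B)
    (f : k →+* K) (hf : f.comp (algebraMap R k) = (algebraMap B₂ K).comp g) (n : ℕ)
    (h : letI : Algebra (k ⊗[R] B) (k ⊗[R] A) :=
        (Algebra.TensorProduct.map (AlgHom.id R k) (IsScalarTower.toAlgHom R B A)).toRingHom.toAlgebra;
      Nonempty ((k ⊗[R] A) ≃ₐ[k ⊗[R] B] MvPolynomial (Fin n) (k ⊗[R] B))) :
    letI : Algebra (K ⊗[B₂] B) (K ⊗[B₂] A) :=
        (Algebra.TensorProduct.map (AlgHom.id B₂ K)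
          (IsScalarTower.toAlgHom B₂ B A)).toRingHom.toAlgebra;
      Nonempty ((K ⊗[B₂] A) ≃ₐ[K ⊗[B₂] B] MvPolynomial (Fin n) (K ⊗[B₂] B)) := by
  letI i1 : Algebra (k ⊗[R] B) (k ⊗[R] A) :=
    (Algebra.TensorProduct.map (AlgHom.id R k) (IsScalarTower.toAlgHom R B A)).toRingHom.toAlgebra
  letI i2 : Algebra (K ⊗[B₂] B) (K ⊗[B₂] A) :=
    (Algebra.TensorProduct.map (AlgHom.id B₂ K)
      (IsScalarTower.toAlgHom B₂ B A)).toRingHom.toAlgebra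
  obtain ⟨e⟩ := h
  letI : Algebra R B₂ := g.toAlgebra
  letI : Algebra R K := ((algebraMap B₂ K).comp g).toAlgebra
  have : IsScalarTower R B₂ K := .of_algebraMap_eq fun _ => rfl
  have : IsScalarTower R B₂ B := .of_algebraMap_eq fun x => (RingHom.congr_fun hg x).symm
  have : IsScalarTower R B₂ A := .of_algebraMap_eq fun x => by
    rw [IsScalarTower.algebraMap_apply B₂ B A, ← IsScalarTower.algebraMap_apply R B₂ B,
      ← IsScalarTower.algebraMap_apply R B A]
  let f' : k →ₐ[R] K := { f with commutes' := fun x => RingHom.congr_fun hf x }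

  let φ : k ⊗[R] B →ₐ[R] K ⊗[B₂] B :=
    Algebra.TensorProduct.lift
      (((Algebra.TensorProduct.includeLeft : K →ₐ[B₂] K ⊗[B₂] B).restrictScalars R).comp f')
      ((Algebra.TensorProduct.includeRight : B →ₐ[B₂] K ⊗[B₂] B).restrictScalars R)
      (fun _ _ => Commute.all _ _)
  let ψ : k ⊗[R] A →ₐ[R] K ⊗[B₂] A :=
    Algebra.TensorProduct.lift
      (((Algebra.TensorProduct.includeLeft : K →ₐ[B₂] K ⊗[B₂] A).restrictScalars R).comp f')
      ((Algebra.TensorProduct.includeRight : A →ₐ[B₂] K ⊗[B₂] A).restrictScalars R)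
      (fun _ _ => Commute.all _ _)
  letI a1 : Algebra (k ⊗[R] B) (K ⊗[B₂] B) := φ.toRingHom.toAlgebra
  letI a2 : Algebra (k ⊗[R] A) (K ⊗[B₂] A) := ψ.toRingHom.toAlgebra
  letI a3 : Algebra (k ⊗[R] B) (K ⊗[B₂] A) :=
    ((algebraMap (k ⊗[R] A) (K ⊗[B₂] A)).comp (algebraMap (k ⊗[R] B) (k ⊗[R] A))).toAlgebra
  letI a4 : Algebra B (k ⊗[R] A) :=
    ((algebraMap A (k ⊗[R] A)).comp (algebraMap B A)).toAlgebra
  letI a5 : Algebra B (K ⊗[B₂] A) :=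
    ((algebraMap A (K ⊗[B₂] A)).comp (algebraMap B A)).toAlgebra
  have t1 : IsScalarTower B A (k ⊗[R] A) := .of_algebraMap_eq fun _ => rfl
  have t2 : IsScalarTower B A (K ⊗[B₂] A) := .of_algebraMap_eq fun _ => rfl
  have t3 : IsScalarTower B (k ⊗[R] B) (k ⊗[R] A) := .of_algebraMap_eq fun x => by
    simp [RingHom.algebraMap_toAlgebra, i1, a4]
  have t4 : IsScalarTower B (K ⊗[B₂] B) (K ⊗[B₂] A) := .of_algebraMap_eq fun x => by
    simp [RingHom.algebraMap_toAlgebra, i2, a5]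
  have t5 : IsScalarTower (k ⊗[R] B) (k ⊗[R] A) (K ⊗[B₂] A) := .of_algebraMap_eq fun _ => rfl
  have t6 : IsScalarTower (k ⊗[R] B) (K ⊗[B₂] B) (K ⊗[B₂] A) := .of_algebraMap_eq fun x => by
    induction x with
    | zero => simp
    | add x y hx hy => simp only [map_add, hx, hy]
    | tmul x y => simp [RingHom.algebraMap_toAlgebra, i1, i2, a1, a2, a3, φ, ψ]
  have t7 : IsScalarTower B (k ⊗[R] B) (K ⊗[B₂] B) := .of_algebraMap_eq fun x => by
    simp [RingHom.algebraMap_toAlgebra, a1, φ]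
  have t8 : IsScalarTower A (k ⊗[R] A) (K ⊗[B₂] A) := .of_algebraMap_eq fun x => by
    simp [RingHom.algebraMap_toAlgebra, a2, ψ]
  have t9 : IsScalarTower B (k ⊗[R] A) (K ⊗[B₂] A) := .of_algebraMap_eq fun x => by
    simp [RingHom.algebraMap_toAlgebra, a2, a4, a5, ψ]
  have p1 : Algebra.IsPushout B (k ⊗[R] B) A (k ⊗[R] A) := isPushout_tensor_aux R B A k rfl
  have p2 : Algebra.IsPushout B (K ⊗[B₂] B) A (K ⊗[B₂] A) := isPushout_tensor_aux B₂ B A K rfl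
  have p3 : Algebra.IsPushout (k ⊗[R] B) (K ⊗[B₂] B) (k ⊗[R] A) (K ⊗[B₂] A) :=
    (Algebra.IsPushout.comp_iff (T := K ⊗[B₂] B) B (k ⊗[R] B) A (k ⊗[R] A)).mp p2
  exact mvPolynomial_of_isPushout p3 e

/-- Let `B₁, B₂` be `R`-subalgebras of `A` and `B = B₁ ⊔ B₂` the subalgebra generated by
`B₁ ∪ B₂`.  If `A ⊗_R κ(P) ≅ (B ⊗_R κ(P))^[n]` for all primes `P` of `R`, then
`A ⊗_{B₂} κ(Q) ≅ (B ⊗_{B₂} κ(Q))^[n]` for all primes `Q` of `B₂`. -/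
theorem fibersPolynomial_base_change_subalgebra
    (R A : Type*) [CommRing R] [CommRing A] [Algebra R A]
    (B₁ B₂ : Subalgebra R A) (n : ℕ)
    (h : FibersPolynomialOver R ↥(B₁ ⊔ B₂) A n) :
    letI : Algebra ↥B₂ ↥(B₁ ⊔ B₂) :=
      (Subalgebra.inclusion (le_sup_right (a := B₁) (b := B₂))).toRingHom.toAlgebra
    letI : IsScalarTower ↥B₂ ↥(B₁ ⊔ B₂) A :=
      IsScalarTower.of_algebraMap_eq fun x => rfl
    FibersPolynomialOver ↥B₂ ↥(B₁ ⊔ B₂) A n := by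
  letI : Algebra ↥B₂ ↥(B₁ ⊔ B₂) :=
      (Subalgebra.inclusion (le_sup_right (a := B₁) (b := B₂))).toRingHom.toAlgebra
  letI : IsScalarTower ↥B₂ ↥(B₁ ⊔ B₂) A :=
      IsScalarTower.of_algebraMap_eq fun x => rfl
  intro Q hQ
  let P : Ideal R := Q.comap (algebraMap R B₂)
  exact polynomial_base_change_aux R B₂ ↥(B₁ ⊔ B₂) A (ResidueFieldAt R P) (ResidueFieldAt B₂ Q)
    (algebraMap R B₂) rfl
    (Ideal.ResidueField.map P Q (algebraMap R B₂) rfl)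
    (by ext x; exact Ideal.ResidueField.map_algebraMap P Q (algebraMap R B₂) rfl x) n
    (h P inferInstance)
end

section
/- Let R be a Noetherian commutative ring, A an 𝔸ⁿ-fibration over R, and (U₁,…,U_s, V₁,…,V_t) an (s+t)-tuple residual variable of A over R. Then (V₁,…,V_t) is a t-tuple residual variable of A over the subring R[U₁,…,U_s]; that is, for every prime ideal Q of R[U₁,…,U_s], A ⊗_{R[U]} κ(Q) is isomorphic, as an (R[U,V] ⊗_{R[U]} κ(Q))-algebra, to a polynomial ring in n − s − t variables over R[U,V] ⊗_{R[U]} κ(Q). -/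
open TensorProduct

noncomputable section

/-- A polynomial algebra stays polynomial after base change. -/
theorem poly_baseChange_aux {C D E A AD AE : Type*} [CommRing C] [CommRing D] [CommRing E]
    [CommRing A] [CommRing AD] [CommRing AE]
    [Algebra C D] [Algebra C E] [Algebra D E] [IsScalarTower C D E] [Algebra C A]
    [Algebra D AD] [Algebra E AE] {m : ℕ}
    (eD : D ⊗[C] A ≃ₐ[D] AD) (eE : E ⊗[C] A ≃ₐ[E] AE)
    (e : AD ≃ₐ[D] MvPolynomial (Fin m) D) :
    Nonempty (AE ≃ₐ[E] MvPolynomial (Fin m) E) := by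
  let e1 : E ⊗[D] (D ⊗[C] A) ≃ₐ[E] E ⊗[C] A := Algebra.TensorProduct.cancelBaseChange C D E E A
  let e2 : E ⊗[D] (D ⊗[C] A) ≃ₐ[E] E ⊗[D] MvPolynomial (Fin m) D :=
    Algebra.TensorProduct.congr AlgEquiv.refl (eD.trans e)
  exact ⟨eE.symm.trans (e1.symm.trans (e2.trans (MvPolynomial.algebraTensorAlgEquiv D E)))⟩

attribute [local instance] Algebra.TensorProduct.rightAlgebra in
/-- `(K ⊗ C) ⊗_C A = K ⊗ A`. -/
theorem fiberEquiv_aux (R K C A : Type*) [CommRing R] [CommRing K] [CommRing C] [CommRing A]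
    [Algebra R K] [Algebra R C] [Algebra R A] [Algebra C A] [IsScalarTower R C A] :
    letI : Algebra (K ⊗[R] C) (K ⊗[R] A) :=
      (Algebra.TensorProduct.map (AlgHom.id R K)
        (IsScalarTower.toAlgHom R C A)).toRingHom.toAlgebra
    Nonempty ((K ⊗[R] C) ⊗[C] A ≃ₐ[K ⊗[R] C] K ⊗[R] A) := by
  let i1 : Algebra (K ⊗[R] C) (K ⊗[R] A) :=
      (Algebra.TensorProduct.map (AlgHom.id R K)
        (IsScalarTower.toAlgHom R C A)).toRingHom.toAlgebra
  let i2 : Algebra C (K ⊗[R] A) :=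
    ((algebraMap A (K ⊗[R] A)).comp (algebraMap C A)).toAlgebra
  have t1 : IsScalarTower C A (K ⊗[R] A) := .of_algebraMap_eq' rfl
  have t2 : IsScalarTower C (K ⊗[R] C) (K ⊗[R] A) := .of_algebraMap_eq fun x ↦ by
    change (1 : K) ⊗ₜ[R] (algebraMap C A x) = Algebra.TensorProduct.map (AlgHom.id R K)
        (IsScalarTower.toAlgHom R C A) (1 ⊗ₜ x)
    simp
  have t3 : IsScalarTower K (K ⊗[R] C) (K ⊗[R] A) := .of_algebraMap_eq fun x ↦ by
    change x ⊗ₜ[R] (1 : A) = Algebra.TensorProduct.map (AlgHom.id R K)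
        (IsScalarTower.toAlgHom R C A) (x ⊗ₜ 1)
    simp
  have t4 : IsScalarTower R (K ⊗[R] C) (K ⊗[R] A) := .of_algebraMap_eq fun x ↦ by
    rw [IsScalarTower.algebraMap_apply R K (K ⊗[R] C), ← IsScalarTower.algebraMap_apply K,
      ← IsScalarTower.algebraMap_apply]
  have h : Algebra.IsPushout C A (K ⊗[R] C) (K ⊗[R] A) :=
    (Algebra.IsPushout.comp_iff R C K (K ⊗[R] C)).mp inferInstance
  have h' := h.symm
  exact ⟨Algebra.IsPushout.equiv C (K ⊗[R] C) A (K ⊗[R] A)⟩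

attribute [local instance] Algebra.TensorProduct.rightAlgebra in
theorem fibersPolynomialOver_tower (R B C A : Type*) [CommRing R] [CommRing B] [CommRing C]
    [CommRing A] [Algebra R B] [Algebra R C] [Algebra R A] [Algebra B C] [Algebra B A]
    [Algebra C A] [IsScalarTower R B C] [IsScalarTower R C A] [IsScalarTower B C A]
    (m : ℕ) (h : FibersPolynomialOver R C A m) : FibersPolynomialOver B C A m := by
  intro Q hQ
  let P : Ideal R := Q.comap (algebraMap R B)
  have hP : P.IsPrime := inferInstance
  obtain ⟨e⟩ := h P hP
  let f : ResidueFieldAt R P →ₐ[R] ResidueFieldAt B Q :=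
    Ideal.ResidueField.mapₐ P Q (Algebra.ofId R B) rfl
  let i1 := (Algebra.TensorProduct.map (AlgHom.id R (ResidueFieldAt R P))
        (IsScalarTower.toAlgHom R C A)).toRingHom.toAlgebra
  let i2 := (Algebra.TensorProduct.map (AlgHom.id B (ResidueFieldAt B Q))
        (IsScalarTower.toAlgHom B C A)).toRingHom.toAlgebra
  obtain ⟨eD⟩ := fiberEquiv_aux R (ResidueFieldAt R P) C A
  obtain ⟨eE⟩ := fiberEquiv_aux B (ResidueFieldAt B Q) C A
  let g : ResidueFieldAt R P ⊗[R] C →ₐ[R] ResidueFieldAt B Q ⊗[B] C :=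
    Algebra.TensorProduct.lift
      (((Algebra.TensorProduct.includeLeft :
        ResidueFieldAt B Q →ₐ[B] ResidueFieldAt B Q ⊗[B] C).restrictScalars R).comp f)
      ((Algebra.TensorProduct.includeRight :
        C →ₐ[B] ResidueFieldAt B Q ⊗[B] C).restrictScalars R)
      (fun _ _ ↦ Commute.all _ _)
  let i3 := g.toRingHom.toAlgebra
  have : IsScalarTower C (ResidueFieldAt R P ⊗[R] C) (ResidueFieldAt B Q ⊗[B] C) :=
    .of_algebraMap_eq fun x ↦ by
      change 1 ⊗ₜ x = g (1 ⊗ₜ x)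
      simp [g]
  exact poly_baseChange_aux eD eE e

end

/-- If `(U₁,…,U_s,V₁,…,V_t)` is an `(s+t)`-tuple residual variable of the `𝔸ⁿ`-fibration
`A` over the Noetherian ring `R`, then `(V₁,…,V_t)` is a `t`-tuple residual variable of
`A` over `R[U₁,…,U_s]` (so in particular, for every prime `Q` of `R[U]`, `A ⊗_{R[U]} κ(Q)`
is a polynomial ring in `n - s - t` variables over `R[U,V] ⊗_{R[U]} κ(Q)`). -/
theorem residualVariable_over_adjoin
    (R A : Type*) [CommRing R] [IsNoetherianRing R] [CommRing A] [Algebra R A]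
    (n s t : ℕ) (hA : IsAffineFibration R A n)
    (U : Fin s → A) (V : Fin t → A)
    (hUV : IsResidualVariable R A n (s + t) (Fin.append U V)) :
    IsResidualVariable ↥(Algebra.adjoin R (Set.range U)) A (n - s) t V := by
  obtain ⟨h1, h2⟩ := hUV
  have hS : AlgebraicIndependent R (Sum.elim V U) := by
    have := h1.comp (Sum.elim (Fin.natAdd s) (Fin.castAdd t)) (by
      intro a b hab
      rcases a with a | a <;> rcases b with b | b <;>
        simp [Fin.ext_iff] at hab ⊢ <;> omega)
    convert this using 1
    funext x
    rcases x with x | x <;> simp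
  refine ⟨(AlgebraicIndependent.sumElim_iff.mp hS).2, ?_⟩
  have hr : Set.range (Fin.append U V) = Set.range U ∪ Set.range V := by
    ext x
    constructor
    · rintro ⟨i, rfl⟩
      refine Fin.addCases (fun i ↦ ?_) (fun i ↦ ?_) i <;> simp
    · rintro (⟨i, rfl⟩ | ⟨i, rfl⟩)
      · exact ⟨Fin.castAdd t i, by simp⟩
      · exact ⟨Fin.natAdd s i, by simp⟩
  have hC := hr ▸ Algebra.adjoin_union_eq_adjoin_adjoin R (Set.range U) (Set.range V)
  have key : ∀ C C' : Subalgebra R A, C = C' → FibersPolynomialOver R C A (n - (s + t)) →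
      FibersPolynomialOver R C' A (n - s - t) := by
    rintro C _ rfl h
    rwa [Nat.sub_sub]
  have h2 := key _ _ hC h2
  exact fibersPolynomialOver_tower R (Algebra.adjoin R (Set.range U))
    (Algebra.adjoin (Algebra.adjoin R (Set.range U)) (Set.range V)) A _ h2
end

section
/- Let R ⊆ B ⊆ A be Noetherian commutative rings such that: (i) A and B are flat as R-modules, and (ii) for every prime ideal P of R, A ⊗_R κ(P) is flat as a module over B ⊗_R κ(P). Then A is flat as a B-module. -/
open TensorProduct

namespace FibFlat
universe u v w x
section
variable {R : Type v} {B : Type u} {A : Type w} [CommRing R] [CommRing B] [CommRing A]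
    [Algebra R B] [Algebra R A] [Algebra B A] [IsScalarTower R B A]

lemma inj_of_zero {L F : Type u} [AddCommGroup L] [Module B L] [AddCommGroup F] [Module B F]
    (f : L →ₗ[B] F) (h : ∀ z, f.rTensor A z = 0 → z = 0) : Function.Injective (f.rTensor A) := by
  rw [injective_iff_map_eq_zero]
  exact h

lemma lift_surj {F M' : Type u} [AddCommGroup F] [Module B F] [AddCommGroup M'] [Module B M']
    (f : F →ₗ[B] M') (hf : Function.Surjective f) (M : Submodule B M')
    (h : Function.Injective ((M.comap f).subtype.rTensor A)) :
    Function.Injective (M.subtype.rTensor A) := by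
  let L := M.comap f
  let g : L →ₗ[B] M := f.restrict (fun x hx => hx)
  have hg : Function.Surjective g := by
    rintro ⟨m, hm⟩
    obtain ⟨x, rfl⟩ := hf m
    exact ⟨⟨x, hm⟩, rfl⟩
  let k : LinearMap.ker f →ₗ[B] L := Submodule.inclusion (fun x hx => by
    change f x ∈ M
    rw [LinearMap.mem_ker.mp hx]; exact M.zero_mem)
  have hgk : g ∘ₗ k = 0 := by
    ext x
    exact x.2
  have hkL : L.subtype ∘ₗ k = (LinearMap.ker f).subtype := rfl
  have hsq : M.subtype ∘ₗ g = f ∘ₗ L.subtype := rfl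
  apply inj_of_zero
  intro z hz
  obtain ⟨y, rfl⟩ := LinearMap.rTensor_surjective A hg z
  rw [← LinearMap.comp_apply, ← LinearMap.rTensor_comp, hsq, LinearMap.rTensor_comp,
    LinearMap.comp_apply] at hz
  obtain ⟨t, ht⟩ := (rTensor_exact A (f.exact_subtype_ker_map) hf _).mp hz
  rw [← hkL, LinearMap.rTensor_comp, LinearMap.comp_apply] at ht
  have := h ht
  rw [← this, ← LinearMap.comp_apply, ← LinearMap.rTensor_comp, hgk]
  simp

/-- flatness modulo `I` -/
def Q (B : Type u) (A : Type w) [CommRing B] [CommRing A] 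
    [Algebra R B] [Algebra B A] (I : Ideal R) : Prop :=
  ∀ (M' : Type u) [AddCommGroup M'] [Module B M'] [Module R M'] [IsScalarTower R B M']
    (M : Submodule B M'), (∀ r ∈ I, ∀ m : M', r • m = 0) →
      Function.Injective (M.subtype.rTensor A)

lemma flat_free [Module.Flat R A] (ι : Type u) : Module.Flat R ((ι →₀ B) ⊗[B] A) := by
  classical
  have e : ((ι →₀ B) ⊗[B] A) ≃ₗ[R] (ι →₀ A) :=
    (TensorProduct.finsuppScalarLeft B A ι).restrictScalars R
  have : Module.Flat R (ι →₀ A) := Module.Flat.of_linearEquiv (finsuppLEquivDirectSum R A ι)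
  exact Module.Flat.of_linearEquiv e

lemma smul_free (I : Ideal R) (F : Type u) [AddCommGroup F] [Module B F] [Module R F] [IsScalarTower R B F]
    [Module.Flat R (F ⊗[B] A)]
    (N : Submodule B F) (hN : ∀ n ∈ N, n ∈ Submodule.span B {y | ∃ r ∈ I, ∃ m : F, y = r • m})
    (hN' : ∀ r ∈ I, ∀ m, r • m ∈ N) :
    Function.Injective (N.subtype.rTensor A) := by
  classical
  let ψ : I → (F →ₗ[B] N) := fun i =>
    LinearMap.codRestrict N ((LinearMap.lsmul B F (algebraMap R B i))) (fun m => by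
      simpa using hN' i i.2 m)
  let φ : I ⊗[R] (F ⊗[B] A) →ₗ[R] N ⊗[B] A :=
    TensorProduct.lift 
      { toFun := fun i => ((ψ i).rTensor A).restrictScalars R
        map_add' := by
          intro i j
          have : ψ (i + j) = ψ i + ψ j := by
            ext; simp [ψ]
          ext t
          simp [this, LinearMap.rTensor_add]
        map_smul' := by
          intro r i
          have : ψ (r • i) = (algebraMap R B r) • ψ i := by
            ext; simp [ψ, mul_smul]
          ext t
          simp only [this, LinearMap.rTensor_smul]
          simp [algebraMap_smul] }
  have hφ : Function.Surjective φ := by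
    have key : ∀ n (hn : n ∈ Submodule.span B {y | ∃ r ∈ I, ∃ m : F, y = r • m}) 
        (hn' : n ∈ N) (a : A), ((⟨n, hn'⟩ : N) ⊗ₜ[B] a) ∈ LinearMap.range φ := by
      intro n hn
      induction hn using Submodule.span_induction with
      | mem y hy =>
        obtain ⟨r, hr, m, rfl⟩ := hy
        intro hn' a
        refine ⟨⟨r, hr⟩ ⊗ₜ (m ⊗ₜ a), ?_⟩
        simp only [φ, TensorProduct.lift.tmul]
        simp only [LinearMap.coe_mk, AddHom.coe_mk, LinearMap.restrictScalars_apply, LinearMap.rTensor_tmul]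
        congr 1
        ext1
        simp [ψ]
      | zero => intro hn' a; exact (show (⟨0, hn'⟩ : N) = 0 from rfl) ▸ by simp
      | add x y hx hy ihx ihy =>
        intro hn' a
        have hs : {y | ∃ r ∈ I, ∃ m : F, y = r • m} ⊆ (N : Set F) := by
          rintro _ ⟨r, hr, m, rfl⟩; exact hN' r hr m
        have hx' := Submodule.span_le.mpr hs hx
        have hy' := Submodule.span_le.mpr hs hy
        have : (⟨x + y, hn'⟩ : N) = ⟨x, hx'⟩ + ⟨y, hy'⟩ := rfl
        rw [this, TensorProduct.add_tmul]
        exact Submodule.add_mem _ (ihx hx' a) (ihy hy' a)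
      | smul b x hx ihx =>
        intro hn' a
        have hs : {y | ∃ r ∈ I, ∃ m : F, y = r • m} ⊆ (N : Set F) := by
          rintro _ ⟨r, hr, m, rfl⟩; exact hN' r hr m
        have hx' := Submodule.span_le.mpr hs hx
        have : (⟨b • x, hn'⟩ : N) = b • ⟨x, hx'⟩ := rfl
        rw [this, TensorProduct.smul_tmul]
        exact ihx hx' _
    intro z
    change z ∈ LinearMap.range φ
    induction z with
    | zero => simp
    | add x y hx hy => exact Submodule.add_mem _ hx hy
    | tmul n a => exact key n (hN n n.2) n.2 a
  have hcomp : ∀ t, N.subtype.rTensor A (φ t) = TensorProduct.lid R _ (I.subtype.rTensor _ t) := by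
    intro t
    induction t with
    | zero => simp
    | add x y hx hy => simp only [map_add, hx, hy]
    | tmul i y =>
      simp only [φ, TensorProduct.lift.tmul, LinearMap.coe_mk, AddHom.coe_mk, LinearMap.restrictScalars_apply,
        LinearMap.rTensor_tmul, TensorProduct.lid_tmul]
      rw [← LinearMap.comp_apply, ← LinearMap.rTensor_comp]
      have : N.subtype ∘ₗ ψ i = (algebraMap R B i) • LinearMap.id := by
        ext; simp [ψ]
      rw [this, LinearMap.rTensor_smul]
      simp [algebraMap_smul]
  apply inj_of_zero
  intro z hz
  obtain ⟨t, rfl⟩ := hφ z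
  rw [hcomp] at hz
  have h2 : I.subtype.rTensor (F ⊗[B] A) t = 0 := by simpa using hz
  have h3 := Module.Flat.rTensor_preserves_injective_linearMap (M := F ⊗[B] A) I.subtype I.injective_subtype
  have : t = 0 := h3 (by rw [h2, map_zero])
  rw [this, map_zero]

lemma inj_of_Q_free (I : Ideal R) (hQ : Q B A I)
    (F : Type u) [AddCommGroup F] [Module B F] [Module R F] [IsScalarTower R B F]
    [Module.Flat R (F ⊗[B] A)]
    (L : Submodule B F) (hM : ∀ r ∈ I, ∀ m : F, r • m ∈ L) :
    Function.Injective (L.subtype.rTensor A) := by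
  let N : Submodule B F := Submodule.span B {y | ∃ r ∈ I, ∃ m : F, y = r • m}
  have hNL : N ≤ L := by
    apply Submodule.span_le.mpr
    rintro _ ⟨r, hr, m, rfl⟩
    exact hM r hr m
  have hNinj : Function.Injective (N.subtype.rTensor A) :=
    smul_free I F N (fun n hn => hn) (fun r hr m => Submodule.subset_span ⟨r, hr, m, rfl⟩)
  let Lb : Submodule B (F ⧸ N) := L.map N.mkQ
  have hLb : Function.Injective (Lb.subtype.rTensor A) := by
    apply hQ
    intro r hr m
    obtain ⟨m, rfl⟩ := N.mkQ_surjective m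
    rw [← LinearMap.map_smul_of_tower]
    exact (Submodule.Quotient.mk_eq_zero N).mpr (Submodule.subset_span ⟨r, hr, m, rfl⟩)
  let q : L →ₗ[B] Lb := N.mkQ.restrict (fun x hx => Submodule.mem_map_of_mem hx)
  have hq : Function.Surjective q := by
    rintro ⟨_, x, hx, rfl⟩
    exact ⟨⟨x, hx⟩, rfl⟩
  let j : N →ₗ[B] L := Submodule.inclusion hNL
  have hjq : Function.Exact j q := by
    intro x
    constructor
    · intro h
      have : N.mkQ x.1 = 0 := congrArg Subtype.val h
      have : x.1 ∈ N := by simpa using this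
      exact ⟨⟨x.1, this⟩, rfl⟩
    · rintro ⟨y, rfl⟩
      apply Subtype.ext
      change N.mkQ y.1 = 0
      simp
  apply inj_of_zero
  intro z hz
  have h1 : Lb.subtype.rTensor A (q.rTensor A z) = 0 := by
    rw [← LinearMap.comp_apply, ← LinearMap.rTensor_comp,
      show Lb.subtype ∘ₗ q = N.mkQ ∘ₗ L.subtype from rfl, LinearMap.rTensor_comp,
      LinearMap.comp_apply, hz, map_zero]
  have h2 : q.rTensor A z = 0 := hLb (by rw [h1, map_zero])
  obtain ⟨t, rfl⟩ := (rTensor_exact A hjq hq z).mp h2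
  rw [← LinearMap.comp_apply, ← LinearMap.rTensor_comp] at hz
  have : t = 0 := hNinj (by rw [map_zero]; exact hz)
  rw [this, map_zero]

/-- Lemma 1 -/
lemma inj_of_Q (I : Ideal R) [Module.Flat R A] (hQ : Q B A I)
    (M' : Type u) [AddCommGroup M'] [Module B M'] [Module R M'] [IsScalarTower R B M']
    (M : Submodule B M') (hM : ∀ r ∈ I, ∀ m : M', r • m ∈ M) :
    Function.Injective (M.subtype.rTensor A) := by
  let F := M' →₀ B
  let f : F →ₗ[B] M' := Finsupp.linearCombination B id
  have hf : Function.Surjective f := Finsupp.linearCombination_id_surjective B M'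
  apply lift_surj f hf
  have := flat_free (R := R) (B := B) (A := A) M'
  refine inj_of_Q_free I hQ F (M.comap f) ?_
  intro r hr m
  change f (r • m) ∈ M
  rw [LinearMap.map_smul_of_tower]
  exact hM r hr _

lemma Q_of_not_prime (I : Ideal R) [Module.Flat R A] (hI : I ≠ ⊤) (hp : ¬ I.IsPrime)
    (ih : ∀ J, I < J → Q B A J) : Q B A I := by
  obtain h | ⟨a, ha, b, hb, hab⟩ := Ideal.not_isPrime_iff.mp hp
  · exact absurd h hI
  intro M' _ _ _ _ M hM'
  have lt : ∀ c ∉ I, I < I ⊔ Ideal.span {c} := by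
    intro c hc
    refine lt_of_le_of_ne le_sup_left fun h => hc ?_
    rw [h]
    exact Ideal.mem_sup_right (Ideal.mem_span_singleton_self c)
  have hQa := ih _ (lt a ha)
  have hQb := ih _ (lt b hb)
  let N : Submodule B M' := M ⊔ LinearMap.range (LinearMap.lsmul B M' (algebraMap R B a))
  have h1 : Function.Injective (N.subtype.rTensor A) := by
    apply inj_of_Q _ hQa
    intro r hr m
    obtain ⟨i, hi, y, hy, rfl⟩ := Submodule.mem_sup.mp hr
    obtain ⟨c, rfl⟩ := Ideal.mem_span_singleton'.mp hy
    rw [add_smul, hM' i hi, zero_add]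
    refine Submodule.mem_sup_right ⟨c • m, ?_⟩
    simp [smul_smul, mul_comm]
  have hMN : M ≤ N := le_sup_left
  let M1 : Submodule B N := M.comap N.subtype
  have h2 : Function.Injective (M1.subtype.rTensor A) := by
    apply inj_of_Q _ hQb
    rintro r hr ⟨n, hn⟩
    change r • n ∈ M
    obtain ⟨i, hi, y, hy, rfl⟩ := Submodule.mem_sup.mp hr
    obtain ⟨c, rfl⟩ := Ideal.mem_span_singleton'.mp hy
    rw [add_smul, hM' i hi, zero_add]
    obtain ⟨m, hm, _, ⟨x, rfl⟩, rfl⟩ := Submodule.mem_sup.mp hn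
    rw [smul_add]
    have : (c * b) • ((LinearMap.lsmul B M') ((algebraMap R B) a)) x = 0 := by
      simp only [LinearMap.lsmul_apply, algebraMap_smul, smul_smul]
      rw [mul_assoc, mul_comm b a]
      exact hM' _ (I.mul_mem_left _ hab) _
    rw [this, add_zero]
    exact M.smul_of_tower_mem _ hm
  let e : M ≃ₗ[B] M1 := (Submodule.comapSubtypeEquivOfLe hMN).symm
  have : M.subtype = N.subtype ∘ₗ M1.subtype ∘ₗ e.toLinearMap := by ext; rfl
  rw [this, LinearMap.rTensor_comp, LinearMap.rTensor_comp]
  rw [LinearMap.coe_comp, LinearMap.coe_comp]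
  exact h1.comp (h2.comp (e.rTensor A).injective)


/-- the comparison map -/
noncomputable def resMap (P : Ideal R) [P.IsPrime] : Localization.AtPrime P →ₗ[R] ResidueFieldAt R P :=
  (IsScalarTower.toAlgHom R (Localization.AtPrime P) (ResidueFieldAt R P)).toLinearMap

lemma resMap_bij (P : Ideal R) [P.IsPrime] (L : Type x) [AddCommGroup L] [Module R L]
    (hL : ∀ r ∈ P, ∀ m : L, r • m = 0) : Function.Bijective ((resMap P).rTensor L) := by
  have hs : Function.Surjective (resMap P) := IsLocalRing.residue_surjective
  refine ⟨?_, LinearMap.rTensor_surjective L hs⟩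
  rw [injective_iff_map_eq_zero]
  intro z hz
  obtain ⟨t, rfl⟩ := (rTensor_exact L (resMap P).exact_subtype_ker_map hs z).mp hz
  induction t with
  | zero => simp
  | add x y hx hy => 
    rw [map_add, hx, hy, add_zero]
    all_goals
    rw [← LinearMap.comp_apply, ← LinearMap.rTensor_comp]
    have : resMap P ∘ₗ (LinearMap.ker (resMap P)).subtype = 0 := by ext x; exact x.2
    simp [this]
  | tmul k l =>
    obtain ⟨k, hk⟩ := k
    simp only [LinearMap.rTensor_tmul, Submodule.subtype_apply]
    have hk' : k ∈ IsLocalRing.maximalIdeal (Localization.AtPrime P) := by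
      rw [← IsLocalRing.residue_eq_zero_iff]; exact hk
    obtain ⟨p, s, rfl⟩ := IsLocalization.exists_mk'_eq P.primeCompl k
    have hp : p ∈ P := (IsLocalization.AtPrime.mk'_mem_maximal_iff (Localization.AtPrime P) P p s).mp hk'
    rw [← IsLocalization.smul_mk'_one, TensorProduct.smul_tmul, hL p hp, TensorProduct.tmul_zero]

lemma res_inj (P : Ideal R) [P.IsPrime] (L L' : Type x) [AddCommGroup L] [Module R L]
    [AddCommGroup L'] [Module R L']
    (hL : ∀ r ∈ P, ∀ m : L, r • m = 0) (hL' : ∀ r ∈ P, ∀ m : L', r • m = 0) 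
    (f : L →ₗ[R] L') (hf : Function.Injective f) : 
    Function.Injective (f.lTensor (ResidueFieldAt R P)) := by
  have h1 : Function.Injective (f.lTensor (Localization.AtPrime P)) :=
    Module.Flat.lTensor_preserves_injective_linearMap f hf
  have h2 := (resMap_bij P L' hL').1.comp h1
  rw [← LinearMap.coe_comp, LinearMap.rTensor_comp_lTensor, ← LinearMap.lTensor_comp_rTensor, LinearMap.coe_comp] at h2
  exact h2.of_comp_right (resMap_bij P L hL).2

lemma res_zero (P : Ideal R) [P.IsPrime] (X : Type x) [AddCommGroup X] [Module R X]
    (hX : ∀ r ∈ P, ∀ m : X, r • m = 0) (z : X) (hz : (1 : ResidueFieldAt R P) ⊗ₜ[R] z = 0) :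
    ∃ s ∉ P, s • z = 0 := by
  have : (1 : Localization.AtPrime P) ⊗ₜ[R] z = 0 := by
    apply (resMap_bij P X hX).1
    rw [map_zero, LinearMap.rTensor_tmul, ← hz]
    congr 1
  have h := (IsLocalizedModule.eq_zero_iff P.primeCompl
    (TensorProduct.mk R (Localization.AtPrime P) X 1)).mp this
  obtain ⟨s, hs⟩ := h
  exact ⟨s, s.2, hs⟩

lemma gen_flat (S : Type x) [CommRing S] [Algebra B S] [Module.Flat S (S ⊗[B] A)]
    {L L' : Type u} [AddCommGroup L] [Module B L] [AddCommGroup L'] [Module B L']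
    (f : L →ₗ[B] L') (hf : Function.Injective (f.baseChange S)) :
    Function.Injective ((f.rTensor A).baseChange S) := by
  have h1 := Module.Flat.rTensor_preserves_injective_linearMap (M := S ⊗[B] A) _ hf
  let e := AlgebraTensorModule.distribBaseChange B S L A
  let e' := AlgebraTensorModule.distribBaseChange B S L' A
  have : e'.toLinearMap ∘ₗ (f.rTensor A).baseChange S = (f.baseChange S).rTensor (S ⊗[B] A) ∘ₗ e.toLinearMap := by
    ext l a
    simp [e, e']
  have h2 := h1.comp e.injective
  have h3 : Function.Injective (e'.toLinearMap ∘ₗ (f.rTensor A).baseChange S) := by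
    rw [this]; exact h2
  rw [LinearMap.coe_comp] at h3
  exact Function.Injective.of_comp h3

attribute [local instance] Algebra.TensorProduct.rightAlgebra in
lemma fiber_lemma (P : Ideal R) [P.IsPrime]
    (hfib : RingHom.Flat (Algebra.TensorProduct.map (AlgHom.id R (ResidueFieldAt R P))
          (IsScalarTower.toAlgHom R B A)).toRingHom)
    {L L' : Type u} [AddCommGroup L] [Module B L] [AddCommGroup L'] [Module B L']
    [Module R L] [Module R L'] [IsScalarTower R B L] [IsScalarTower R B L']
    (hL : ∀ r ∈ P, ∀ m : L, r • m = 0) (hL' : ∀ r ∈ P, ∀ m : L', r • m = 0) 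
    (f : L →ₗ[B] L') (hf : Function.Injective f) (z : L ⊗[B] A) (hz : f.rTensor A z = 0) :
    ∃ s ∉ P, s • z = 0 := by
  let K := ResidueFieldAt R P
  have hfl : Module.Flat (K ⊗[R] B) ((K ⊗[R] B) ⊗[B] A) := by
    rw [← RingHom.flat_algebraMap_iff]
    have h := RingHom.Flat.comp hfib (.of_bijective (f := (Algebra.IsPushout.cancelBaseChangeAlg R K B (K ⊗[R] B) A).symm.toAlgHom.toRingHom) (Algebra.IsPushout.cancelBaseChangeAlg R K B (K ⊗[R] B) A).symm.bijective)
    convert h using 1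
    exact congrArg (fun g => g.toRingHom) (Algebra.IsPushout.cancelBaseChange_symm_comp_lTensor R B A K).symm
  let c (X : Type (max u w)) [AddCommGroup X] [Module B X] [Module R X] [IsScalarTower R B X] :=
    Algebra.IsPushout.cancelBaseChange R K B (K ⊗[R] B) X
  have hbc : Function.Injective (f.baseChange (K ⊗[R] B)) := by
    have h1 := res_inj P L L' hL hL' (f.restrictScalars R) hf
    let c := Algebra.IsPushout.cancelBaseChange R K B (K ⊗[R] B) L
    let c' := Algebra.IsPushout.cancelBaseChange R K B (K ⊗[R] B) L'
    have h2 : ∀ t, (f.baseChange (K ⊗[R] B)) (c.symm t) = c'.symm ((f.restrictScalars R).lTensor K t) := by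
      intro t
      induction t with
      | zero => simp
      | add x y hx hy => simp only [map_add, hx, hy]
      | tmul k l => simp [c, c']
    intro x y hxy
    obtain ⟨x, rfl⟩ := c.symm.surjective x
    obtain ⟨y, rfl⟩ := c.symm.surjective y
    rw [h2, h2] at hxy
    rw [h1 (c'.symm.injective hxy)]
  have h := gen_flat (A := A) (K ⊗[R] B) f hbc
  have h0 : (1 : K ⊗[R] B) ⊗ₜ[B] z = 0 := h (by simp [hz])
  have h1 : (1 : K) ⊗ₜ[R] z = 0 := by
    have := congrArg (Algebra.IsPushout.cancelBaseChange R K B (K ⊗[R] B) (L ⊗[B] A)) h0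
    rwa [Algebra.IsPushout.cancelBaseChange_tmul, map_zero] at this
  refine res_zero P _ ?_ z h1
  intro r hr t
  induction t with
  | zero => simp
  | add x y hx hy => rw [smul_add, hx, hy, add_zero]
  | tmul l a => rw [TensorProduct.smul_tmul', hL r hr, TensorProduct.zero_tmul]
lemma inj_of_Q_top (M' : Type u) [AddCommGroup M'] [Module B M'] (M : Submodule B M')
    (h : ∀ m : M', m = 0) : Function.Injective (M.subtype.rTensor A) := by
  apply inj_of_zero
  intro z hz
  clear hz
  induction z with
  | zero => rfl
  | add x y hx hy => rw [hx, hy, add_zero]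
  | tmul m a =>
    have : m = 0 := Subtype.ext (h m)
    rw [this, TensorProduct.zero_tmul]

lemma inj_torsionfree (P : Ideal R) [P.IsPrime] [Module.Flat R A]
    (hfib : RingHom.Flat (Algebra.TensorProduct.map (AlgHom.id R (ResidueFieldAt R P))
          (IsScalarTower.toAlgHom R B A)).toRingHom)
    (ih : ∀ J, P < J → Q B A J)
    (F : Type u) [AddCommGroup F] [Module B F] [Module R F] [IsScalarTower R B F]
    (hF : ∀ r ∈ P, ∀ m : F, r • m = 0) (hreg : ∀ s ∉ P, IsSMulRegular F s)
    (L : Submodule B F) : Function.Injective (L.subtype.rTensor A) := by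
  apply inj_of_zero
  intro z hz
  have hL : ∀ r ∈ P, ∀ m : L, r • m = 0 := fun r hr m => Subtype.ext (hF r hr m)
  obtain ⟨s, hs, hsz⟩ := fiber_lemma P hfib hL hF L.subtype L.injective_subtype z hz
  let μ : L →ₗ[B] L := LinearMap.lsmul B L (algebraMap R B s)
  have hμ' : ∀ l, μ l = s • l := fun l => algebraMap_smul B s l
  have hμ : Function.Injective μ := by
    intro x y hxy
    rw [hμ', hμ'] at hxy
    exact Subtype.ext (hreg s hs (congrArg Subtype.val hxy))
  have lt : P < P ⊔ Ideal.span {s} := by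
    refine lt_of_le_of_ne le_sup_left fun h => hs ?_
    rw [h]
    exact Ideal.mem_sup_right (Ideal.mem_span_singleton_self s)
  have h1 : Function.Injective ((LinearMap.range μ).subtype.rTensor A) := by
    apply inj_of_Q _ (ih _ lt)
    intro r hr m
    obtain ⟨i, hi, y, hy, rfl⟩ := Submodule.mem_sup.mp hr
    obtain ⟨c, rfl⟩ := Ideal.mem_span_singleton'.mp hy
    rw [add_smul, hL i hi, zero_add]
    refine ⟨c • m, ?_⟩
    rw [hμ', smul_smul, mul_comm]
  let e := LinearEquiv.ofInjective μ hμ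
  have h2 : Function.Injective (μ.rTensor A) := by
    have : μ = (LinearMap.range μ).subtype ∘ₗ e.toLinearMap := by ext; rfl
    rw [this, LinearMap.rTensor_comp, LinearMap.coe_comp]
    exact h1.comp (e.rTensor A).injective
  apply h2
  rw [map_zero, ← hsz]
  have : μ = (algebraMap R B s) • LinearMap.id := by ext; simp [μ]
  rw [this, LinearMap.rTensor_smul]
  simp [algebraMap_smul]

lemma reg_quot (P : Ideal R) [P.IsPrime] [Module.Flat R B] (s : R) (hs : s ∉ P) :
    IsSMulRegular (B ⧸ P.map (algebraMap R B)) s := by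
  have h0 : IsSMulRegular (R ⧸ P) s := by
    intro x y hxy
    simp only [Algebra.smul_def] at hxy
    refine mul_left_cancel₀ ?_ hxy
    simpa [Ideal.Quotient.eq_zero_iff_mem] using hs
  have h1 : IsSMulRegular (B ⊗[R] (R ⧸ P)) s := h0.lTensor B
  exact h1.of_injective
    ((Algebra.TensorProduct.quotIdealMapEquivTensorQuot B P).toLinearEquiv.toLinearMap.restrictScalars R)
    (Algebra.TensorProduct.quotIdealMapEquivTensorQuot B P).injective

lemma Q_of_prime (P : Ideal R) [P.IsPrime] [Module.Flat R A] [Module.Flat R B]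
    (hfib : RingHom.Flat (Algebra.TensorProduct.map (AlgHom.id R (ResidueFieldAt R P))
          (IsScalarTower.toAlgHom R B A)).toRingHom)
    (ih : ∀ J, P < J → Q B A J) : Q B A P := by
  intro M' _ _ _ _ M hM'
  let C := B ⧸ P.map (algebraMap R B)
  have hann : ∀ m : M', P.map (algebraMap R B) ≤ LinearMap.ker (LinearMap.toSpanSingleton B M' m) := by
    intro m
    rw [Ideal.map_le_iff_le_comap]
    intro r hr
    change algebraMap R B r • m = 0
    rw [algebraMap_smul, hM' r hr]
  let g : M' → (C →ₗ[B] M') := fun m => Submodule.liftQ _ (LinearMap.toSpanSingleton B M' m) (hann m)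
  let f : (M' →₀ C) →ₗ[B] M' := Finsupp.lsum ℕ g
  have hf : Function.Surjective f := by
    intro m
    refine ⟨Finsupp.single m (Submodule.Quotient.mk 1), ?_⟩
    simp only [f, Finsupp.lsum_single, g]
    exact one_smul B m
  apply lift_surj f hf
  apply inj_torsionfree P hfib ih
  · intro r hr m
    ext i
    simp only [Finsupp.smul_apply, Finsupp.zero_apply]
    obtain ⟨b, hb⟩ := Ideal.Quotient.mk_surjective (m i)
    rw [← hb, Algebra.smul_def, IsScalarTower.algebraMap_apply R B C]
    change Ideal.Quotient.mk _ (algebraMap R B r) * _ = 0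
    rw [Ideal.Quotient.eq_zero_iff_mem.mpr (Ideal.mem_map_of_mem _ hr), zero_mul]
  · intro s hs x y hxy
    ext i
    exact reg_quot P s hs (DFunLike.congr_fun hxy i)

lemma Q_all [IsNoetherianRing R] [Module.Flat R A] [Module.Flat R B]
    (hfib : ∀ (P : Ideal R) [P.IsPrime],
      RingHom.Flat (Algebra.TensorProduct.map (AlgHom.id R (ResidueFieldAt R P))
          (IsScalarTower.toAlgHom R B A)).toRingHom) (I : Ideal R) : Q B A I := by
  induction I using WellFoundedGT.induction with
  | ind I ih =>
    by_cases hI : I = ⊤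
    · intro M' _ _ _ _ M hM'
      apply inj_of_Q_top
      intro m
      have := hM' 1 (hI ▸ Submodule.mem_top) m
      rwa [one_smul] at this
    by_cases hp : I.IsPrime
    · exact Q_of_prime I (hfib I) ih
    · exact Q_of_not_prime I hI hp ih
end
end FibFlat

set_option synthInstance.maxHeartbeats 1000000 in
/-- Let `R ⊆ B ⊆ A` be Noetherian rings such that `A` and `B` are flat over `R` and
`A ⊗_R κ(P)` is flat over `B ⊗_R κ(P)` for every prime ideal `P` of `R`.
Then `A` is flat over `B`. -/
theorem flat_of_fiberwise_flat
    (R B A : Type*) [CommRing R] [CommRing B] [CommRing A]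
    [IsNoetherianRing R] [IsNoetherianRing B] [IsNoetherianRing A]
    [Algebra R B] [Algebra R A] [Algebra B A] [IsScalarTower R B A]
    (hRB : Function.Injective (algebraMap R B))
    (hBA : Function.Injective (algebraMap B A))
    (hAflat : Module.Flat R A) (hBflat : Module.Flat R B)
    (hfib : ∀ (P : Ideal R) (_ : P.IsPrime),
      letI alg : Algebra (ResidueFieldAt R P ⊗[R] B) (ResidueFieldAt R P ⊗[R] A) :=
        (Algebra.TensorProduct.map (AlgHom.id R (ResidueFieldAt R P))
          (IsScalarTower.toAlgHom R B A)).toRingHom.toAlgebra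
      letI : Module (ResidueFieldAt R P ⊗[R] B) (ResidueFieldAt R P ⊗[R] A) :=
        alg.toModule
      Module.Flat (ResidueFieldAt R P ⊗[R] B) (ResidueFieldAt R P ⊗[R] A)) :
    Module.Flat B A := by
  have := hAflat
  have := hBflat
  have hQ : FibFlat.Q B A (⊥ : Ideal R) := FibFlat.Q_all (fun P hP => hfib P hP) ⊥
  refine Module.Flat.iff_rTensor_injective'.mpr fun J => ?_
  refine hQ B J ?_
  intro r hr m
  rw [Ideal.mem_bot.mp hr, zero_smul]
end

section
/- Let R ⊆ B ⊆ A be Noetherian commutative rings such that A is an 𝔸ⁿ-fibration over R, B is an 𝔸ᵐ-fibration over R, and for every prime ideal P of R, A ⊗_R κ(P) is isomorphic, as a (B ⊗_R κ(P))-algebra, to a polynomial ring in n − m variables over B ⊗_R κ(P). Then A is an 𝔸^{n−m}-fibration over B. -/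
open TensorProduct

open IsLocalRing Algebra in
theorem aux_smooth0 {B P S Bp Pp Sp : Type*} [CommRing B] [CommRing P]
    [CommRing S] [CommRing Bp] [CommRing Pp] [CommRing Sp] [Algebra B P]
    [Algebra B S] [Algebra P S] [IsScalarTower B P S] [IsLocalRing S]
    [Algebra B Bp] [Algebra B Pp] [Algebra Bp Pp] [Algebra P Pp] [IsScalarTower B Bp Pp]
    [IsScalarTower B P Pp] [Algebra.IsPushout B Bp P Pp]
    [Algebra Pp Sp] [Algebra Bp Sp] [IsScalarTower Bp Pp Sp]
    [IsLocalRing Sp] [Algebra Sp (ResidueField S)] [Algebra Pp (ResidueField S)]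
    [IsScalarTower Pp Sp (ResidueField S)] [IsScalarTower P Pp (ResidueField S)]
    [FormallySmooth B P] [Module.Free P Ω[P⁄B]] [Module.Finite P Ω[P⁄B]]
    (h₁ : Function.Surjective (algebraMap P S)) (h₂ : (RingHom.ker (algebraMap P S)).FG)
    (h₁' : Function.Surjective (algebraMap Pp Sp))
    (e₁ : RingHom.ker (algebraMap Pp Sp) ≃ₗ[Pp] Pp ⊗[P] RingHom.ker (algebraMap P S))
    (he₁ : ∀ y, (e₁.symm (1 ⊗ₜ y)).1 = algebraMap P Pp y)
    (h₃ : maximalIdeal Sp ≤ RingHom.ker (algebraMap Sp (ResidueField S)))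
    [FormallySmooth Bp Sp] :
    FormallySmooth B S := by
  have : FormallySmooth Bp Pp := .of_equiv (Algebra.IsPushout.equiv B Bp P Pp)
  let e₀ : Ω[Pp⁄Bp] ≃ₗ[Pp] Pp ⊗[P] Ω[P⁄B] :=
    (KaehlerDifferential.tensorKaehlerEquiv B Bp P Pp).symm
  have : Module.Free Pp Ω[Pp⁄Bp] := .of_equiv e₀.symm
  have : Module.Finite Pp Ω[Pp⁄Bp] := .of_surjective e₀.symm.toLinearMap e₀.symm.surjective
  have h₂' : (RingHom.ker (algebraMap Pp Sp)).FG := by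
    suffices Module.Finite Pp (RingHom.ker (algebraMap Pp Sp)) from (Submodule.fg_top _).mp this.1
    have : Module.Finite P (RingHom.ker (algebraMap P S)) := ⟨(Submodule.fg_top _).mpr h₂⟩
    exact .equiv e₁.symm
  rw [Algebra.FormallySmooth.iff_injective_cotangentComplexBaseChange_residueField (P := P) h₁ h₂]
  have hinj := (Algebra.FormallySmooth.iff_injective_cotangentComplexBaseChange
    (R := Bp) Pp (ResidueField S) h₁' h₂' h₃).mp inferInstance
  let K := ResidueField S
  let eᵣ : K ⊗[Pp] Ω[Pp⁄Bp] ≃ₗ[K] K ⊗[P] Ω[P⁄B] :=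
    (AlgebraTensorModule.congr (.refl K _) e₀) ≪≫ₗ
      (AlgebraTensorModule.cancelBaseChange P Pp K K Ω[P⁄B])
  let eₗ : K ⊗[Pp] RingHom.ker (algebraMap Pp Sp) ≃ₗ[K]
      K ⊗[P] RingHom.ker (algebraMap P S) :=
    (AlgebraTensorModule.congr (.refl K K) e₁) ≪≫ₗ
      (AlgebraTensorModule.cancelBaseChange P Pp K K _)
  have key : ∀ x, KaehlerDifferential.cotangentComplexBaseChange B S P K x =
      eᵣ (KaehlerDifferential.cotangentComplexBaseChange Bp Sp Pp K (eₗ.symm x)) := by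
    intro x
    induction x with
    | zero => simp only [LinearEquiv.map_zero, LinearMap.map_zero]
    | add x y hx hy => simp only [LinearEquiv.map_add, LinearMap.map_add, hx, hy]
    | tmul x y =>
    have h1 : eₗ.symm (x ⊗ₜ y) = x ⊗ₜ e₁.symm (1 ⊗ₜ y) := by
      rw [LinearEquiv.symm_apply_eq]
      simp [eₗ]
    rw [h1, KaehlerDifferential.cotangentComplexBaseChange_tmul,
      KaehlerDifferential.cotangentComplexBaseChange_tmul]
    have h2 : e₀ (KaehlerDifferential.D Bp Pp (algebraMap P Pp y)) =
        1 ⊗ₜ KaehlerDifferential.D B P y := by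
      simp only [e₀]
      rw [LinearEquiv.symm_apply_eq, KaehlerDifferential.tensorKaehlerEquiv_tmul_D, one_smul]
    simp [eᵣ, he₁, h2]
  intro x y hxy
  apply eₗ.symm.injective
  apply hinj
  apply eᵣ.injective
  exact ((key x).symm.trans hxy).trans (key y)

theorem map_comp_aux {R k B P S : Type*} [CommRing R] [CommRing k] [CommRing B] [CommRing P]
    [CommRing S] [Algebra R k] [Algebra R B] [Algebra R P] [Algebra R S] [Algebra B P]
    [Algebra B S] [Algebra P S] [IsScalarTower R B P] [IsScalarTower R P S]
    [IsScalarTower R B S] [IsScalarTower B P S] :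
    (Algebra.TensorProduct.map (AlgHom.id R k) (IsScalarTower.toAlgHom R B S)).toRingHom =
    (Algebra.TensorProduct.map (AlgHom.id k k) (IsScalarTower.toAlgHom R P S)).toRingHom.comp
      (Algebra.TensorProduct.map (AlgHom.id k k) (IsScalarTower.toAlgHom R B P)).toRingHom := by
  ext x
  · simp
  · simp [← IsScalarTower.algebraMap_apply]

open IsLocalRing Algebra in
set_option maxHeartbeats 1000000 in
attribute [local instance] Algebra.TensorProduct.rightAlgebra in
theorem aux_smooth {R k B P S : Type*} [CommRing R] [CommRing k] [CommRing B] [CommRing P]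
    [CommRing S] [Algebra R k] [Algebra R B] [Algebra R P] [Algebra R S] [Algebra B P]
    [Algebra B S] [Algebra P S] [IsScalarTower R B P] [IsScalarTower R P S]
    [IsScalarTower R B S] [IsScalarTower B P S] [Module.Flat R S] [IsLocalRing S]
    [Algebra k (ResidueField S)] [IsScalarTower R k (ResidueField S)]
    (hk : Function.Surjective (Algebra.TensorProduct.includeRight : S →ₐ[R] k ⊗[R] S))
    [FormallySmooth B P] [Module.Free P Ω[P⁄B]] [Module.Finite P Ω[P⁄B]]
    (h₁ : Function.Surjective (algebraMap P S)) (h₂ : (RingHom.ker (algebraMap P S)).FG)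
    (hs : (Algebra.TensorProduct.map (AlgHom.id R k)
        (IsScalarTower.toAlgHom R B S)).toRingHom.FormallySmooth) :
    FormallySmooth B S := by
  let Bp := k ⊗[R] B
  let Sp := k ⊗[R] S
  let Pp := k ⊗[R] P
  let φ : Pp →ₐ[k] Sp := Algebra.TensorProduct.map (.id _ _) (IsScalarTower.toAlgHom _ _ _)
  let β : Bp →ₐ[k] Pp := Algebra.TensorProduct.map (.id _ _) (IsScalarTower.toAlgHom _ _ _)
  let ψ : Sp →ₐ[R] ResidueField S := Algebra.TensorProduct.lift (IsScalarTower.toAlgHom _ _ _)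
    (IsScalarTower.toAlgHom _ _ _) fun _ _ ↦ .all _ _
  have : Nontrivial Sp := ψ.toRingHom.domain_nontrivial
  have : IsLocalRing Sp := IsLocalRing.of_surjective' _ hk
  algebraize [φ.toRingHom, β.toRingHom, (φ.toRingHom.comp β.toRingHom),
    (φ.toRingHom.comp (algebraMap P Pp)), ((algebraMap P Pp).comp (algebraMap B P)), ψ.toRingHom,
    ψ.toRingHom.comp φ.toRingHom]
  have hs' : FormallySmooth Bp Sp := by
    rw [map_comp_aux (P := P)] at hs
    exact hs
  have := IsScalarTower.of_algebraMap_eq' φ.comp_algebraMap.symm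
  have := IsScalarTower.of_algebraMap_eq' ψ.comp_algebraMap.symm
  have : IsScalarTower B P Pp := .of_algebraMap_eq' rfl
  have : IsScalarTower P S Sp := .of_algebraMap_eq' rfl
  have : IsScalarTower B Bp Pp := .of_algebraMap_eq fun r ↦ by
    simp [RingHom.algebraMap_toAlgebra, β, Bp, Pp]
  have : IsScalarTower k Bp Pp := .of_algebraMap_eq fun r ↦ by
    simp [RingHom.algebraMap_toAlgebra, β, Bp, Pp]
  have : IsScalarTower R Bp Pp := .to₁₃₄ _ k _ _
  have : Algebra.IsPushout B P Bp Pp := (Algebra.IsPushout.comp_iff R B k Bp (T := P) (T' := Pp)).mp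
    inferInstance
  have : Algebra.IsPushout B Bp P Pp := .symm inferInstance
  have : IsScalarTower S Sp (ResidueField S) := .of_algebraMap_eq fun r ↦ by
    simp [RingHom.algebraMap_toAlgebra, ψ, Sp]
  have : IsScalarTower P Sp (ResidueField S) := .to₁₃₄ _ S _ _
  have : IsScalarTower P Pp (ResidueField S) := .to₁₂₄ _ _ Sp _
  let e₁ : RingHom.ker φ ≃ₗ[Pp] Pp ⊗[P] RingHom.ker (algebraMap P S) :=
    kerTensorProductMapIdToAlgHomEquiv _ _ _ _ h₁
  have he₁ : ∀ y, (e₁.symm (1 ⊗ₜ y)).1 = algebraMap P Pp y := by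
    intro y
    simp only [e₁, Pp, Algebra.TensorProduct.one_def]
    rw [kerTensorProductMapIdToAlgHomEquiv_symm_apply]
    rw [one_mul]
    rfl
  have h₁' : Function.Surjective φ := LinearMap.lTensor_surjective _ h₁
  have h₃ : maximalIdeal Sp ≤ RingHom.ker ψ := by
    intro x hx
    obtain ⟨x, rfl⟩ := hk x
    have : ¬IsUnit x := fun h ↦ hx <| h.map Algebra.TensorProduct.includeRight
    simpa [ψ, Sp]
  exact aux_smooth0 (Bp := Bp) (Pp := Pp) (Sp := Sp) h₁ h₂ h₁' e₁ he₁ h₃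

attribute [local instance] Algebra.TensorProduct.rightAlgebra in
theorem map_fs_aux {R k B P : Type*} [CommRing R] [CommRing k] [CommRing B] [CommRing P]
    [Algebra R k] [Algebra R B] [Algebra R P] [Algebra B P] [IsScalarTower R B P]
    [Algebra.FormallySmooth B P] :
    (Algebra.TensorProduct.map (AlgHom.id k k)
      (IsScalarTower.toAlgHom R B P)).toRingHom.FormallySmooth := by
  let Bp := k ⊗[R] B
  let Pp := k ⊗[R] P
  let β : Bp →ₐ[k] Pp := Algebra.TensorProduct.map (.id _ _) (IsScalarTower.toAlgHom _ _ _)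
  algebraize [β.toRingHom, ((algebraMap P Pp).comp (algebraMap B P))]
  have : IsScalarTower B P Pp := .of_algebraMap_eq' rfl
  have : IsScalarTower B Bp Pp := .of_algebraMap_eq fun r ↦ by
    simp [RingHom.algebraMap_toAlgebra, β, Bp, Pp]
  have : IsScalarTower k Bp Pp := .of_algebraMap_eq fun r ↦ by
    simp [RingHom.algebraMap_toAlgebra, β, Bp, Pp]
  have : IsScalarTower R Bp Pp := .to₁₃₄ _ k _ _
  have : Algebra.IsPushout B P Bp Pp := (Algebra.IsPushout.comp_iff R B k Bp (T := P) (T' := Pp)).mp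
    inferInstance
  have : Algebra.IsPushout B Bp P Pp := .symm inferInstance
  have : Algebra.FormallySmooth Bp Pp := .of_equiv (Algebra.IsPushout.equiv B Bp P Pp)
  exact this

open IsLocalRing Algebra in
theorem smooth_local {R k B A S : Type*} [CommRing R] [CommRing k] [CommRing B] [CommRing A]
    [CommRing S] [Algebra R k] [Algebra R B] [Algebra R A] [Algebra R S] [Algebra B A]
    [Algebra B S] [Algebra A S] [IsScalarTower R B A] [IsScalarTower R A S]
    [IsScalarTower R B S] [IsScalarTower B A S] [Module.Flat R S] [IsLocalRing S]
    [Algebra k (ResidueField S)] [IsScalarTower R k (ResidueField S)]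
    (M : Submonoid A) [IsLocalization M S] [Algebra.FinitePresentation B A]
    (hk : Function.Surjective (Algebra.TensorProduct.includeRight : S →ₐ[R] k ⊗[R] S))
    (hs : (Algebra.TensorProduct.map (AlgHom.id R k)
        (IsScalarTower.toAlgHom R B A)).toRingHom.FormallySmooth) :
    FormallySmooth B S := by
  have : FormallySmooth A S := .of_isLocalization M
  have hs' : (Algebra.TensorProduct.map (AlgHom.id R k)
        (IsScalarTower.toAlgHom R B S)).toRingHom.FormallySmooth := by
    rw [map_comp_aux (P := A)]
    exact RingHom.FormallySmooth.comp hs map_fs_aux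
  obtain ⟨n, f₀, hf₀⟩ := Algebra.FiniteType.iff_quotient_mvPolynomial''.mp
    (inferInstance : Algebra.FiniteType B A)
  let M' := M.comap f₀
  let P' := Localization M'
  let fP : P' →ₐ[B] S := IsLocalization.liftAlgHom (M := M')
      (f := (IsScalarTower.toAlgHom B A S).comp f₀) fun x ↦ by
    simpa using IsLocalization.map_units (M := M) _ ⟨f₀ x.1, x.2⟩
  have hf₁ : Function.Surjective fP := by
    intro x
    obtain ⟨x, ⟨s, hs⟩, rfl⟩ := IsLocalization.exists_mk'_eq M x
    obtain ⟨x, rfl⟩ := hf₀ x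
    obtain ⟨s, rfl⟩ := hf₀ s
    refine ⟨IsLocalization.mk' (M := M') _ x ⟨s, hs⟩, ?_⟩
    simp [fP, IsLocalization.lift_mk', Units.mul_inv_eq_iff_eq_mul, IsUnit.liftRight]
  have hfP : (RingHom.ker fP).FG := by
    have := Algebra.FinitePresentation.ker_fG_of_surjective _ hf₀
    convert! this.map (algebraMap _ P')
    refine le_antisymm ?_ (Ideal.map_le_iff_le_comap.mpr fun x hx ↦ by simp_all [fP])
    intro x hx
    obtain ⟨x, s, rfl⟩ := IsLocalization.exists_mk'_eq M' x
    obtain ⟨a, ha, e⟩ : ∃ a ∈ M, a * f₀ x = 0 := by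
      simpa [fP, IsLocalization.lift_mk', IsLocalization.map_eq_zero_iff M] using hx
    obtain ⟨a, rfl⟩ := hf₀ a
    rw [IsLocalization.mk'_mem_map_algebraMap_iff]
    exact ⟨a, ha, by simpa⟩
  algebraize [fP.toRingHom]
  have : FormallyEtale (MvPolynomial (Fin n) B) P' := .of_isLocalization M'
  have : FormallySmooth B P' := .comp _ (MvPolynomial (Fin n) B) _
  have : Module.Free P' Ω[P'⁄B] :=
    .of_equiv (KaehlerDifferential.tensorKaehlerEquivOfFormallyEtale B (MvPolynomial (Fin n) B) P')
  have : IsScalarTower R B P' := inferInstance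
  have : IsScalarTower B P' S := .of_algebraMap_eq' fP.comp_algebraMap.symm
  have : IsScalarTower R P' S := .to₁₃₄ _ B _ _
  exact aux_smooth (k := k) (P := P') hk hf₁ hfP hs'

theorem fiber_aux0 {B Bp A Ap K : Type*} [CommRing B] [CommRing Bp] [CommRing A] [CommRing Ap]
    [CommRing K] [Algebra B Bp] [Algebra B A] [Algebra B Ap] [Algebra Bp Ap] [Algebra A Ap]
    [IsScalarTower B Bp Ap] [IsScalarTower B A Ap] [Algebra.IsPushout B Bp A Ap]
    [Algebra B K] [Algebra Bp K] [IsScalarTower B Bp K] (d : ℕ)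
    (e : Ap ≃ₐ[Bp] MvPolynomial (Fin d) Bp) :
    Nonempty (K ⊗[B] A ≃ₐ[K] MvPolynomial (Fin d) K) :=
  ⟨(Algebra.TensorProduct.cancelBaseChange B Bp K K A).symm.trans <|
    (Algebra.TensorProduct.congr AlgEquiv.refl
      ((Algebra.IsPushout.equiv B Bp A Ap).trans e)).trans
      (MvPolynomial.algebraTensorAlgEquiv Bp K)⟩

attribute [local instance] Algebra.TensorProduct.rightAlgebra in
theorem fiber_aux {R k B A K : Type*} [CommRing R] [CommRing k] [CommRing B] [CommRing A]
    [CommRing K] [Algebra R k] [Algebra R B] [Algebra R A] [Algebra B A] [IsScalarTower R B A]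
    [Algebra R K] [Algebra k K] [Algebra B K] [IsScalarTower R k K] [IsScalarTower R B K] (d : ℕ)
    (h : letI : Algebra (k ⊗[R] B) (k ⊗[R] A) :=
      (Algebra.TensorProduct.map (AlgHom.id R k)
        (IsScalarTower.toAlgHom R B A)).toRingHom.toAlgebra
      Nonempty ((k ⊗[R] A) ≃ₐ[k ⊗[R] B] MvPolynomial (Fin d) (k ⊗[R] B))) :
    Nonempty (K ⊗[B] A ≃ₐ[K] MvPolynomial (Fin d) K) := by
  let Bp := k ⊗[R] B
  let Pp := k ⊗[R] A
  let β : Bp →ₐ[R] Pp := Algebra.TensorProduct.map (.id _ _) (IsScalarTower.toAlgHom _ _ _)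
  let ψ : Bp →ₐ[R] K := Algebra.TensorProduct.lift (IsScalarTower.toAlgHom _ _ _)
    (IsScalarTower.toAlgHom _ _ _) fun _ _ ↦ .all _ _
  algebraize [β.toRingHom, ((algebraMap A Pp).comp (algebraMap B A)), ψ.toRingHom]
  have : IsScalarTower B A Pp := .of_algebraMap_eq' rfl
  have : IsScalarTower B Bp Pp := .of_algebraMap_eq fun r ↦ by
    simp [RingHom.algebraMap_toAlgebra, β, Bp, Pp]
  have : IsScalarTower k Bp Pp := .of_algebraMap_eq fun r ↦ by
    simp [RingHom.algebraMap_toAlgebra, β, Bp, Pp]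
  have : IsScalarTower R Bp Pp := .to₁₃₄ _ k _ _
  have : IsScalarTower B Bp K := .of_algebraMap_eq fun r ↦ by
    simp [RingHom.algebraMap_toAlgebra, ψ, Bp]
  have : Algebra.IsPushout B A Bp Pp := (Algebra.IsPushout.comp_iff R B k Bp (T := A) (T' := Pp)).mp
    inferInstance
  have : Algebra.IsPushout B Bp A Pp := .symm inferInstance
  obtain ⟨e⟩ := h
  exact fiber_aux0 (Bp := Bp) (Ap := Pp) d e

theorem fs_of_mvPolynomial {C D : Type*} [CommRing C] [CommRing D] (f : C →+* D) (d : ℕ)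
    (h : letI := f.toAlgebra; Nonempty (D ≃ₐ[C] MvPolynomial (Fin d) C)) : f.FormallySmooth := by
  letI := f.toAlgebra
  obtain ⟨e⟩ := h
  exact Algebra.FormallySmooth.of_equiv e.symm

theorem smooth_aux
    (R B A : Type*) [CommRing R] [CommRing B] [CommRing A]
    [Algebra R B] [Algebra R A] [Algebra B A] [IsScalarTower R B A]
    [Algebra.FinitePresentation B A] [Module.Flat R A] (d : ℕ)
    (hfib : FibersPolynomialOver R B A d) :
    Algebra.FormallySmooth B A := by
  refine Algebra.smoothLocus_eq_univ_iff.mp (Set.eq_univ_iff_forall.mpr fun q ↦ ?_)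
  let Q := q.asIdeal
  let p := Q.under R
  let Rp := Localization.AtPrime p
  let S := Localization.AtPrime Q
  let := Localization.AtPrime.algebraOfLiesOver p Q
  have : Module.Flat R S := Module.Flat.trans R A S
  have hk : Function.Surjective (Algebra.TensorProduct.includeRight :
      S →ₐ[R] ResidueFieldAt R p ⊗[R] S) := by
    intro x
    induction x with
    | zero => exact ⟨0, map_zero _⟩
    | add x y hx hy =>
      obtain ⟨a, rfl⟩ := hx
      obtain ⟨b, rfl⟩ := hy
      exact ⟨a + b, map_add _ _ _⟩
    | tmul x s =>
      obtain ⟨r, rfl⟩ := IsLocalRing.residue_surjective x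
      have : IsLocalRing.residue Rp r = r • (1 : ResidueFieldAt R p) := by
        rw [Algebra.smul_def, mul_one]; rfl
      have hc : TensorProduct.CompatibleSMul R Rp (ResidueFieldAt R p) S := inferInstance
      refine ⟨r • s, ?_⟩
      rw [this, TensorProduct.smul_tmul]
      rfl
  exact smooth_local (R := R) (k := ResidueFieldAt R p) (S := S) Q.primeCompl hk
    (fs_of_mvPolynomial _ d (hfib p inferInstance))

/-- Let `R ⊆ B ⊆ A` be Noetherian rings such that `A` is an `𝔸ⁿ`-fibration over `R`,
`B` is an `𝔸ᵐ`-fibration over `R`, and `A ⊗_R κ(P) = (B ⊗_R κ(P))^[n-m]` for every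
prime ideal `P` of `R`.  Then `A` is an `𝔸^{n-m}`-fibration over `B`. -/
theorem isAffineFibration_over_intermediate
    (R B A : Type*) [CommRing R] [CommRing B] [CommRing A]
    [IsNoetherianRing R] [IsNoetherianRing B] [IsNoetherianRing A]
    [Algebra R B] [Algebra R A] [Algebra B A] [IsScalarTower R B A]
    (hRB : Function.Injective (algebraMap R B))
    (hBA : Function.Injective (algebraMap B A))
    (n m : ℕ)
    (hA : IsAffineFibration R A n) (hB : IsAffineFibration R B m)
    (hfib : FibersPolynomialOver R B A (n - m)) :
    IsAffineFibration B A (n - m) := by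
  obtain ⟨hA1, hA2, -⟩ := hA
  have hft : Algebra.FiniteType B A := Algebra.FiniteType.of_restrictScalars_finiteType R B A
  have : Algebra.FinitePresentation B A := Algebra.FinitePresentation.of_finiteType.mp hft
  have : Algebra.FormallySmooth B A := smooth_aux R B A _ hfib
  have : Algebra.Smooth B A := ⟨inferInstance, inferInstance⟩
  refine ⟨hft, inferInstance, fun q hq ↦ ?_⟩
  let p := q.under R
  let := Localization.AtPrime.algebraOfLiesOver p q
  exact fiber_aux (R := R) (k := ResidueFieldAt R p) _ (hfib p inferInstance)
end

section
/- Let R be a Noetherian factorial (unique factorization) domain and A an 𝔸^{m+1}-fibration over R. Then an m-tuple W = (W₁,…,W_m) of elements of A is an m-tuple residual variable of A over R if and only if A is isomorphic, as an R[W]-algebra, to a polynomial ring in one variable over R[W] (and hence A is a polynomial ring in m+1 variables over R). -/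
open TensorProduct

section helpers
open Polynomial

theorem aux_den (R M : Type*) [CommRing R] [AddCommGroup M] [Module R M] (P : Ideal R) [P.IsPrime]
    (t : P.ResidueField ⊗[R] M) : ∃ s : R, s ∉ P ∧ ∃ x : M, s • t = 1 ⊗ₜ[R] x := by
  induction t using TensorProduct.induction_on with
  | zero => exact ⟨1, fun h => ‹P.IsPrime›.ne_top ((Ideal.eq_top_iff_one P).2 h), 0, by simp⟩
  | tmul k x =>
    obtain ⟨a, b, hb, rfl⟩ := IsFractionRing.div_surjective (A := R ⧸ P) k
    obtain ⟨a, rfl⟩ := Ideal.Quotient.mk_surjective a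
    obtain ⟨b, rfl⟩ := Ideal.Quotient.mk_surjective b
    have hbP : b ∉ P := fun h => by
      have := nonZeroDivisors.ne_zero hb
      exact this (Ideal.Quotient.eq_zero_iff_mem.2 h)
    refine ⟨b, hbP, a • x, ?_⟩
    rw [← TensorProduct.smul_tmul, TensorProduct.smul_tmul']
    congr 1
    have h1 : algebraMap R P.ResidueField b ≠ 0 := by
      rwa [Ne, Ideal.algebraMap_residueField_eq_zero]
    have h2 : ∀ r : R, algebraMap (R ⧸ P) P.ResidueField (Ideal.Quotient.mk P r)
      = algebraMap R P.ResidueField r := fun r =>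
        (IsScalarTower.algebraMap_apply R (R ⧸ P) P.ResidueField r).symm
    rw [h2, h2, Algebra.smul_def, Algebra.smul_def]
    field_simp
  | add x y hx hy =>
    obtain ⟨s, hs, a, ha⟩ := hx
    obtain ⟨t, ht, b, hb⟩ := hy
    refine ⟨s * t, fun h => (‹P.IsPrime›.mem_or_mem h).elim hs ht, t • a + s • b, ?_⟩
    rw [smul_add, mul_comm s t, mul_smul, ha, mul_comm t s, mul_smul, hb, tmul_add, tmul_smul,
      tmul_smul]

theorem aux_inj (R M : Type*) [CommRing R] [AddCommGroup M] [Module R M] [Module.Flat R M]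
    (P : Ideal R) [P.IsPrime] :
    Function.Injective (LinearMap.rTensor M
      (IsScalarTower.toAlgHom R (R ⧸ P) P.ResidueField).toLinearMap) := by
  apply Module.Flat.rTensor_preserves_injective_linearMap
  exact IsFractionRing.injective (R ⧸ P) P.ResidueField

theorem aux_ker (R M : Type*) [CommRing R] [AddCommGroup M] [Module R M] [Module.Flat R M]
    (P : Ideal R) [P.IsPrime] (x : M) :
    (1 : P.ResidueField) ⊗ₜ[R] x = 0 ↔ x ∈ P • (⊤ : Submodule R M) := by
  have h := aux_inj R M P
  have h1 : LinearMap.rTensor M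
      (IsScalarTower.toAlgHom R (R ⧸ P) P.ResidueField).toLinearMap
      ((1 : R ⧸ P) ⊗ₜ[R] x) = 1 ⊗ₜ[R] x := by simp
  rw [← h1, map_eq_zero_iff _ h, ← map_eq_zero_iff _ (quotTensorEquivQuotSMul M P).injective,
    quotTensorEquivQuotSMul_mk_one_tmul, Submodule.Quotient.mk_eq_zero]

theorem aux_ker_alg (R A : Type*) [CommRing R] [CommRing A] [Algebra R A] [Module.Flat R A]
    (P : Ideal R) [P.IsPrime] (x : A) :
    (1 : P.ResidueField) ⊗ₜ[R] x = 0 ↔ x ∈ P.map (algebraMap R A) := by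
  rw [aux_ker, Ideal.smul_top_eq_map]; rfl

/-- purity -/
theorem aux_pure_module (R : Type*) [CommRing R] [IsNoetherianRing R] (B A : Type*)
    [AddCommGroup B] [Module R B] [AddCommGroup A] [Module R A]
    [Module.Flat R A] [Module.Flat R B] (f : B →ₗ[R] A)
    (hf : ∀ (P : Ideal R) [P.IsPrime], Function.Injective (f.lTensor P.ResidueField))
    (M : Type _) [AddCommGroup M] [Module R M] (hM : Module.Finite R M) :
    Function.Injective (f.lTensor M) := by
  induction hM using IsNoetherianRing.induction_on_isQuotientEquivQuotientPrime R with
  | subsingleton N =>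
    exact Function.injective_of_subsingleton _
  | quotient N p e =>
    have hp := p.2
    have h1 := aux_inj R B p.1
    have h2 := hf p.1
    have h3 : Function.Injective (e.toLinearMap.rTensor B) :=
      Module.Flat.rTensor_preserves_injective_linearMap _ e.injective
    have h4 := (h2.comp h1).comp h3
    set g := (IsScalarTower.toAlgHom R (R ⧸ p.1) p.1.ResidueField).toLinearMap
    have h5 : (f.lTensor p.1.ResidueField ∘ₗ g.rTensor B) ∘ₗ e.toLinearMap.rTensor B =
      (g.rTensor A ∘ₗ e.toLinearMap.rTensor A) ∘ₗ f.lTensor N := by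
      ext; simp
    rw [← LinearMap.coe_comp, ← LinearMap.coe_comp, h5, LinearMap.coe_comp] at h4
    exact h4.of_comp
  | exact N₁ N₂ N₃ i g hi hg hig h1 h3 =>
    rw [injective_iff_map_eq_zero]
    intro x hx
    have e1 : Function.Exact (i.rTensor B) (g.rTensor B) := rTensor_exact B hig hg
    have hx3 : g.rTensor B x = 0 := by
      apply h3
      have : (f.lTensor N₃ ∘ₗ g.rTensor B) x = (g.rTensor A ∘ₗ f.lTensor N₂) x := by
        congr 1; ext; simp
      simp only [LinearMap.comp_apply] at this
      rw [this, hx]; simp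
    obtain ⟨y, rfl⟩ := (e1 x).1 hx3
    have hy : y = 0 := by
      apply h1
      have hiA : Function.Injective (i.rTensor A) :=
        Module.Flat.rTensor_preserves_injective_linearMap _ hi
      apply hiA
      have : (f.lTensor N₂ ∘ₗ i.rTensor B) y = (i.rTensor A ∘ₗ f.lTensor N₁) y := by
        congr 1; ext; simp
      simp only [LinearMap.comp_apply] at this
      rw [← this, hx]; simp
    rw [hy, map_zero]

theorem aux_pure (R : Type*) [CommRing R] [IsNoetherianRing R] (B A : Type*)
    [CommRing B] [Algebra R B] [CommRing A] [Algebra R A]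
    [Module.Flat R A] [Module.Flat R B] (f : B →ₐ[R] A)
    (hf : ∀ (P : Ideal R) [P.IsPrime], Function.Injective (f.toLinearMap.lTensor P.ResidueField))
    (I : Ideal R) (b : B) (hb : f b ∈ I.map (algebraMap R A)) : b ∈ I.map (algebraMap R B) := by
  have h := aux_pure_module R B A f.toLinearMap hf (R ⧸ I) inferInstance
  have key : ∀ (D : Type _) [CommRing D] [Algebra R D] (d : D),
      (1 : R ⧸ I) ⊗ₜ[R] d = 0 ↔ d ∈ I.map (algebraMap R D) := by
    intro D _ _ d
    rw [← map_eq_zero_iff _ (quotTensorEquivQuotSMul D I).injective,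
      quotTensorEquivQuotSMul_mk_one_tmul, Submodule.Quotient.mk_eq_zero, Ideal.smul_top_eq_map]
    rfl
  rw [← key]
  apply h
  rw [map_zero, LinearMap.lTensor_tmul]
  have key2 : (1 : R ⧸ I) ⊗ₜ[R] (f b) = 0 := by
    rw [← map_eq_zero_iff _ (quotTensorEquivQuotSMul A I).injective,
      quotTensorEquivQuotSMul_mk_one_tmul, Submodule.Quotient.mk_eq_zero, Ideal.smul_top_eq_map]
    exact hb
  exact key2

/-- fibre data at a prime -/
structure FData (R B A C : Type*) [CommRing R] [CommRing B] [CommRing A] [Algebra R B] [Algebra R A]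
    [Algebra B A] [CommRing C] (P : Ideal R) where
  β : B →+* C
  Φ : A →+* C[X]
  comm : ∀ b, Φ (algebraMap B A b) = Polynomial.C (β b)
  kerA : ∀ a, Φ a = 0 ↔ a ∈ P.map (algebraMap R A)
  kerB : ∀ b, β b = 0 ↔ b ∈ P.map (algebraMap R B)
  denB : ∀ u, ∃ s ∉ P, ∃ b, β (algebraMap R B s) * u = β b
  denA : ∀ u, ∃ s ∉ P, ∃ a, Polynomial.C (β (algebraMap R B s)) * u = Φ a
  ne : ∀ s ∉ P, β (algebraMap R B s) ≠ 0

section core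
variable {R B A : Type*} [CommRing R] [CommRing B] [CommRing A] [Algebra R B] [Algebra R A]
    [Algebra B A]

theorem FData.map_aeval {C : Type*} [CommRing C] {P : Ideal R} (D : FData R B A C P) (f : B[X]) (a : A) :
    D.Φ (aeval a f) = (f.map D.β).comp (D.Φ a) := by
  induction f using Polynomial.induction_on' with
  | add p q hp hq => simp [hp, hq]
  | monomial n b => simp [D.comm, aeval_monomial, Polynomial.map_monomial]

theorem FData.trans {C : Type*} [CommRing C] [IsDomain C] {P : Ideal R} (D : FData R B A C P)
    (a : A) (ha : (D.Φ a).natDegree ≠ 0) (f : B[X])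
    (hf : aeval a f ∈ P.map (algebraMap R A)) (n : ℕ) : f.coeff n ∈ P.map (algebraMap R B) := by
  rw [← D.kerA, D.map_aeval] at hf
  rw [← D.kerB, ← Polynomial.coeff_map]
  rw [Polynomial.comp_eq_zero_iff] at hf
  rcases hf with h | ⟨_, h⟩
  · simp [h]
  · rw [h] at ha; simp at ha

theorem FData.dich [IsScalarTower R B A] {C : Type*} [CommRing C] [IsDomain C] {P : Ideal R}
    (D : FData R B A C P)
    (hpure : ∀ (I : Ideal R) (b : B), algebraMap B A b ∈ I.map (algebraMap R A) →
      b ∈ I.map (algebraMap R B))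
    (a : A) (ha : (D.Φ a).natDegree = 0) : ∃ b : B, a - algebraMap B A b ∈ P.map (algebraMap R A) := by
  obtain ⟨u, hu⟩ : ∃ u, D.Φ a = Polynomial.C u := ⟨_, Polynomial.eq_C_of_natDegree_eq_zero ha⟩
  obtain ⟨s, hs, b, hb⟩ := D.denB u
  have hsb : algebraMap B A (algebraMap R B s) * a - algebraMap B A b ∈ P.map (algebraMap R A) := by
    rw [← D.kerA, map_sub, map_mul, D.comm, D.comm, hu, ← Polynomial.C_mul, hb, sub_self]
  have h1 : b ∈ (P ⊔ Ideal.span {s}).map (algebraMap R B) := by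
    apply hpure
    have h2 : algebraMap B A b = algebraMap R A s * a -
      (algebraMap B A (algebraMap R B s) * a - algebraMap B A b) := by
      rw [IsScalarTower.algebraMap_apply R B A]; ring
    rw [h2]
    apply Ideal.sub_mem
    · apply Ideal.mul_mem_right
      apply Ideal.mem_map_of_mem
      exact Ideal.mem_sup_right (Ideal.mem_span_singleton_self s)
    · exact Ideal.map_mono le_sup_left hsb
  rw [Ideal.map_sup, Ideal.map_span, Set.image_singleton, Submodule.mem_sup] at h1
  obtain ⟨x, hx, y, hy, rfl⟩ := h1
  obtain ⟨b', rfl⟩ := Ideal.mem_span_singleton.1 hy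
  refine ⟨b', ?_⟩
  rw [← D.kerA]
  have h3 : Polynomial.C (D.β (algebraMap R B s)) * D.Φ (a - algebraMap B A b') = 0 := by
    rw [← D.kerB] at hx
    rw [map_sub, D.comm, hu, ← Polynomial.C_sub, ← Polynomial.C_mul, mul_sub, hb, map_add, hx,
      map_mul]
    simp
  rcases mul_eq_zero.1 h3 with h | h
  · exact absurd (Polynomial.C_eq_zero.1 h) (D.ne s hs)
  · exact h

theorem FData.denF [IsDomain R] {C : Type*} [CommRing C] [IsDomain C]
    (D : FData R B A C (⊥ : Ideal R)) (F : A) (s0 : R) (hs0 : s0 ≠ 0)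
    (hF : Polynomial.C (D.β (algebraMap R B s0)) * X = D.Φ F) (u : C[X]) :
    ∃ s : R, s ≠ 0 ∧ ∃ g : B[X], Polynomial.C (D.β (algebraMap R B s)) * u = D.Φ (aeval F g) := by
  induction u using Polynomial.induction_on' with
  | add p q hp hq =>
    obtain ⟨s, hs, g, hg⟩ := hp
    obtain ⟨t, ht, h, hh⟩ := hq
    refine ⟨s * t, mul_ne_zero hs ht, Polynomial.C (algebraMap R B t) * g +
      Polynomial.C (algebraMap R B s) * h, ?_⟩
    simp only [map_add, map_mul, aeval_C, D.comm, ← hg, ← hh]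
    ring
  | monomial n c =>
    obtain ⟨s, hs, b, hb⟩ := D.denB c
    refine ⟨s * s0 ^ n, mul_ne_zero (by simpa using hs) (pow_ne_zero _ hs0),
      Polynomial.C b * X ^ n, ?_⟩
    simp only [map_mul, map_pow, aeval_C, aeval_X, D.comm, ← hF, ← hb,
      ← Polynomial.C_mul_X_pow_eq_monomial]
    ring

theorem FData.deriv [IsScalarTower R B A] [IsDomain R] {C : Type*} [CommRing C] [IsDomain C]
    (D : FData R B A C (⊥ : Ideal R)) (hfin : Algebra.FiniteType R A) :
    ∃ N : R, N ≠ 0 ∧ ∀ a : A, ∃ a' : A,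
      Polynomial.C (D.β (algebraMap R B N)) * derivative (D.Φ a) = D.Φ a' := by
  classical
  obtain ⟨S, hS⟩ := hfin.out
  have h1 : ∀ T : Finset A, ∃ N : R, N ≠ 0 ∧ ∀ a ∈ T, ∃ a' : A,
      Polynomial.C (D.β (algebraMap R B N)) * derivative (D.Φ a) = D.Φ a' := by
    intro T
    induction T using Finset.induction_on with
    | empty => exact ⟨1, one_ne_zero, by simp⟩
    | insert x T hx ih =>
      obtain ⟨N, hN, h⟩ := ih
      obtain ⟨s, hs, y, hy⟩ := D.denA (derivative (D.Φ x))
      refine ⟨s * N, mul_ne_zero (by simpa using hs) hN, ?_⟩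
      intro a ha
      rcases Finset.mem_insert.1 ha with rfl | ha
      · refine ⟨algebraMap B A (algebraMap R B N) * y, ?_⟩
        simp only [map_mul, D.comm, ← hy]; ring
      · obtain ⟨a', ha'⟩ := h a ha
        refine ⟨algebraMap B A (algebraMap R B s) * a', ?_⟩
        simp only [map_mul, D.comm, ← ha']; ring
  obtain ⟨N, hN, h⟩ := h1 S
  refine ⟨N, hN, fun a => ?_⟩
  have ha : a ∈ Algebra.adjoin R (S : Set A) := by rw [hS]; trivial
  induction ha using Algebra.adjoin_induction with
  | mem x hx => exact h x hx
  | algebraMap r =>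
    refine ⟨0, ?_⟩
    rw [IsScalarTower.algebraMap_apply R B A, D.comm]; simp
  | add x y _ _ hx hy =>
    obtain ⟨x', hx⟩ := hx
    obtain ⟨y', hy⟩ := hy
    exact ⟨x' + y', by rw [map_add, map_add, map_add, mul_add, hx, hy]⟩
  | mul x y _ _ hx hy =>
    obtain ⟨x', hx⟩ := hx
    obtain ⟨y', hy⟩ := hy
    refine ⟨x' * y + x * y', ?_⟩
    rw [map_mul, derivative_mul, map_add, map_mul, map_mul, ← hx, ← hy]; ring

theorem core [IsScalarTower R B A] [IsDomain R] [UniqueFactorizationMonoid R]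
    {C : Type*} [CommRing C] [IsDomain C]
    (D : FData R B A C (⊥ : Ideal R)) (hfin : Algebra.FiniteType R A) (ρ : B →ₐ[R] R)
    (hpure : ∀ (I : Ideal R) (b : B), algebraMap B A b ∈ I.map (algebraMap R A) →
      b ∈ I.map (algebraMap R B))
    (hdich : ∀ p : R, Prime p → ∀ a : A,
      (∃ b : B, a - algebraMap B A b ∈ (Ideal.span {p}).map (algebraMap R A)) ∨
      ∀ f : B[X], aeval a f ∈ (Ideal.span {p}).map (algebraMap R A) → ∀ n,
        f.coeff n ∈ (Ideal.span {p}).map (algebraMap R B)) :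
    ∃ F : A, Function.Bijective (aeval F : B[X] →ₐ[B] A) := by
  have hinj : Function.Injective D.Φ := by
    rw [injective_iff_map_eq_zero]
    intro a ha
    simpa [D.kerA, Ideal.map_bot] using ha
  have hne : ∀ s : R, s ≠ 0 → D.β (algebraMap R B s) ≠ 0 := fun s hs => D.ne s (by simpa using hs)
  have tf : ∀ (s : R) (a b : A), s ≠ 0 → algebraMap R A s * a = algebraMap R A s * b → a = b := by
    intro s a b hs h
    apply hinj
    have := congrArg D.Φ h
    rw [map_mul, map_mul, IsScalarTower.algebraMap_apply R B A, D.comm] at this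
    exact mul_left_cancel₀ (fun h => hne s hs (Polynomial.C_eq_zero.1 h)) this
  obtain ⟨s0, hs0, F0, hF0⟩ := D.denA X
  replace hs0 : s0 ≠ 0 := by simpa using hs0
  obtain ⟨N, hN, hder⟩ := D.deriv hfin
  have hdiv : ∀ (q : R) (c : B) (F : A), F0 = algebraMap B A c + algebraMap R A q * F →
      q ∣ N * s0 := by
    intro q c F h
    obtain ⟨a', ha'⟩ := hder F
    have h1 : D.Φ (algebraMap B A (algebraMap R B (N * s0))) = D.Φ (algebraMap R A q * a') := by
      have h2 := congrArg (fun z => Polynomial.C (D.β (algebraMap R B N)) * derivative z) hF0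
      simp only [h, map_add, map_mul, D.comm, IsScalarTower.algebraMap_apply R B A q] at h2
      rw [D.comm, map_mul D.Φ, IsScalarTower.algebraMap_apply R B A q, ← ha', D.comm]
      simp only [derivative_mul, derivative_C, derivative_X, zero_mul, mul_one, zero_add] at h2
      simp only [map_mul]
      rw [h2]; ring
    have h3 := hinj h1
    have h4 : algebraMap R B (N * s0) ∈ (Ideal.span {q}).map (algebraMap R B) := by
      apply hpure
      rw [h3]
      exact Ideal.mul_mem_right _ _ (Ideal.mem_map_of_mem _ (Ideal.mem_span_singleton_self q))
    rw [Ideal.map_span, Set.image_singleton, Ideal.mem_span_singleton] at h4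
    have := map_dvd ρ h4
    simpa using this
  let K : Set R := {k | ∃ (q : R) (c : B) (F : A), N * s0 = q * k ∧
    F0 = algebraMap B A c + algebraMap R A q * F}
  have hK : K.Nonempty := ⟨N * s0, 1, 0, F0, by simp, by simp⟩
  obtain ⟨k, ⟨q, c, F, hk, hF⟩, hmin⟩ :=
    (IsWellFounded.wf : WellFounded (DvdNotUnit : R → R → Prop)).has_min K hK
  have hNs : N * s0 ≠ 0 := mul_ne_zero hN hs0
  have hq : q ≠ 0 := by rintro rfl; simp at hk; rcases hk with h | h <;> contradiction
  have htr : ∀ p : R, Prime p → ∀ f : B[X],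
      aeval F f ∈ (Ideal.span {p}).map (algebraMap R A) → ∀ n,
        f.coeff n ∈ (Ideal.span {p}).map (algebraMap R B) := by
    intro p hp
    rcases hdich p hp F with ⟨b, hb⟩ | h
    · exfalso
      rw [Ideal.map_span, Set.image_singleton, Ideal.mem_span_singleton] at hb
      obtain ⟨F', hF'⟩ := hb
      have h1 : F0 = algebraMap B A (c + algebraMap R B q * b) + algebraMap R A (q * p) * F' := by
        rw [map_add, map_mul, map_mul, mul_assoc, ← hF', hF, ← IsScalarTower.algebraMap_apply R B A]
        ring
      obtain ⟨k', hk'⟩ := hdiv _ _ _ h1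
      have h2 : k = k' * p := by
        apply mul_left_cancel₀ hq
        rw [← hk, hk']; ring
      refine hmin k' ⟨q * p, _, F', hk', h1⟩ ⟨?_, p, hp.not_isUnit, h2⟩
      rintro rfl
      simp at hk'; rcases hk' with h | h <;> contradiction
    · exact h
  refine ⟨F, ?_, ?_⟩
  · rw [injective_iff_map_eq_zero]
    intro f hf
    have hdeg : (D.Φ F).natDegree ≠ 0 := by
      intro h
      obtain ⟨u, hu⟩ : ∃ u, D.Φ F = Polynomial.C u := ⟨_, Polynomial.eq_C_of_natDegree_eq_zero h⟩
      rw [hF, map_add, map_mul, IsScalarTower.algebraMap_apply R B A, D.comm, D.comm, hu] at hF0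
      have := congrArg (fun z => Polynomial.coeff z 1) hF0
      simp [Polynomial.coeff_C] at this
      exact hne s0 hs0 this
    ext n
    have := D.trans F hdeg f (by rw [hf]; exact Ideal.zero_mem _) n
    simpa [Ideal.map_bot] using this
  · intro a
    obtain ⟨s, hs, g, hg⟩ := D.denF F0 s0 hs0 hF0 (D.Φ a)
    have h1 : algebraMap R A s * a =
        aeval F (g.comp (Polynomial.C c + Polynomial.C (algebraMap R B q) * X)) := by
      apply hinj
      rw [map_mul, IsScalarTower.algebraMap_apply R B A, D.comm, hg, aeval_comp]
      congr 2
      rw [hF]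
      simp [← IsScalarTower.algebraMap_apply R B A]
    generalize g.comp (Polynomial.C c + Polynomial.C (algebraMap R B q) * X) = g' at h1
    clear hg g
    induction s using UniqueFactorizationMonoid.induction_on_prime generalizing a g' with
    | h₁ => exact absurd rfl hs
    | h₂ x hx =>
      obtain ⟨y, hy⟩ := hx.exists_left_inv
      refine ⟨Polynomial.C (algebraMap R B y) * g', ?_⟩
      rw [map_mul, ← h1, aeval_C, ← IsScalarTower.algebraMap_apply R B A, ← mul_assoc, ← map_mul, hy]
      simp
    | h₃ x p hx hp ih =>
      have h2 := htr p hp g' (by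
        rw [← h1, map_mul, mul_assoc]
        exact Ideal.mul_mem_right _ _ (Ideal.mem_map_of_mem _ (Ideal.mem_span_singleton_self p)))
      simp only [Ideal.map_span, Set.image_singleton, Ideal.mem_span_singleton] at h2
      rw [← Polynomial.C_dvd_iff_dvd_coeff] at h2
      obtain ⟨h, rfl⟩ := h2
      refine ih a hx h ?_
      apply tf p _ _ hp.ne_zero
      rw [← mul_assoc, ← map_mul, h1, map_mul, aeval_C, ← IsScalarTower.algebraMap_apply R B A]
end core

noncomputable def mkFData {R B A : Type*} [CommRing R] [CommRing B] [CommRing A] [Algebra R B]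
    [Algebra R A] [Algebra B A] [IsScalarTower R B A] [Module.Flat R A] [Module.Flat R B]
    (P : Ideal R) [P.IsPrime] [Nontrivial (P.ResidueField ⊗[R] B)]
    (e : (P.ResidueField ⊗[R] A) ≃+* (P.ResidueField ⊗[R] B)[X])
    (he : ∀ u, e (Algebra.TensorProduct.map (AlgHom.id R P.ResidueField)
        (IsScalarTower.toAlgHom R B A) u) = Polynomial.C u) :
    FData R B A (P.ResidueField ⊗[R] B) P :=
  have hs : ∀ (D : Type _) [CommRing D] [Algebra R D] (s : R) (t : P.ResidueField ⊗[R] D),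
      (1 ⊗ₜ[R] algebraMap R D s) * t = s • t := by
    intro D _ _ s t
    rw [Algebra.algebraMap_eq_smul_one, tmul_smul, ← Algebra.TensorProduct.one_def, smul_mul_assoc,
      one_mul]
  have hsA : ∀ (s : R) (t : P.ResidueField ⊗[R] A),
      (1 ⊗ₜ[R] algebraMap R A s) * t = s • t := by
    intro s t
    rw [Algebra.algebraMap_eq_smul_one, tmul_smul, ← Algebra.TensorProduct.one_def, smul_mul_assoc,
      one_mul]
  have hc : ∀ b : B, e (1 ⊗ₜ[R] algebraMap B A b) = Polynomial.C (1 ⊗ₜ[R] b) := by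
    intro b
    rw [← he]; simp
  { β := (Algebra.TensorProduct.includeRight : B →ₐ[R] P.ResidueField ⊗[R] B).toRingHom
    Φ := e.toRingHom.comp
      (Algebra.TensorProduct.includeRight : A →ₐ[R] P.ResidueField ⊗[R] A).toRingHom
    comm := hc
    kerA := fun a => by
      rw [← aux_ker_alg]
      exact map_eq_zero_iff e e.injective
    kerB := fun b => by
      rw [← aux_ker_alg]
      rfl
    denB := fun u => by
      obtain ⟨s, h, b, hb⟩ := aux_den R B P u
      exact ⟨s, h, b, (hs B s u).trans hb⟩
    denA := fun u => by
      obtain ⟨s, h, a, ha⟩ := aux_den R A P (e.symm u)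
      refine ⟨s, h, a, ?_⟩
      change Polynomial.C (1 ⊗ₜ[R] algebraMap R B s) * u = e (1 ⊗ₜ[R] a)
      rw [← ha, ← hsA, map_mul, IsScalarTower.algebraMap_apply R B A, hc, e.apply_symm_apply]
    ne := fun s h => by
      change (1 : P.ResidueField) ⊗ₜ[R] algebraMap R B s ≠ 0
      rw [Algebra.algebraMap_eq_smul_one, ← smul_tmul, Algebra.smul_def, mul_one]
      change algebraMap P.ResidueField (P.ResidueField ⊗[R] B) (algebraMap R P.ResidueField s) ≠ 0
      rw [Ne, map_eq_zero_iff _ (algebraMap P.ResidueField (P.ResidueField ⊗[R] B)).injective,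
        Ideal.algebraMap_residueField_eq_zero]
      exact h }

theorem fibers_equiv {R B A : Type*} [CommRing R] [CommRing B] [CommRing A] [Algebra R B]
    [Algebra R A] [Algebra B A] [IsScalarTower R B A] (h : FibersPolynomialOver R B A 1)
    (P : Ideal R) [hP : P.IsPrime] :
    ∃ e : (P.ResidueField ⊗[R] A) ≃+* (P.ResidueField ⊗[R] B)[X],
    ∀ u, e (Algebra.TensorProduct.map (AlgHom.id R P.ResidueField)
        (IsScalarTower.toAlgHom R B A) u) = Polynomial.C u := by
  letI : Algebra (ResidueFieldAt R P ⊗[R] B) (ResidueFieldAt R P ⊗[R] A) :=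
      (Algebra.TensorProduct.map (AlgHom.id R (ResidueFieldAt R P))
        (IsScalarTower.toAlgHom R B A)).toRingHom.toAlgebra
  obtain ⟨e⟩ := h P hP
  let e' := e.trans (MvPolynomial.uniqueAlgEquiv (ResidueFieldAt R P ⊗[R] B) (Fin 1))
  exact ⟨e'.toRingEquiv, fun u => e'.commutes u⟩

theorem forward (R B A : Type*) [CommRing R] [IsDomain R] [IsNoetherianRing R]
    [UniqueFactorizationMonoid R] [CommRing B] [CommRing A] [Algebra R B]
    [Algebra R A] [Algebra B A] [IsScalarTower R B A] [Module.Flat R A]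
    (hfin : Algebra.FiniteType R A) {σ : Type*} (ι : MvPolynomial σ R ≃ₐ[R] B)
    (h : FibersPolynomialOver R B A 1) :
    Nonempty (A ≃ₐ[B] B[X]) := by
  have : Module.Flat R B := Module.Flat.of_linearEquiv ι.symm.toLinearEquiv
  have hdom : ∀ (P : Ideal R) [P.IsPrime], IsDomain (P.ResidueField ⊗[R] B) := by
    intro P _
    let e1 : P.ResidueField ⊗[R] B ≃ₐ[P.ResidueField] MvPolynomial σ P.ResidueField :=
      (Algebra.TensorProduct.congr AlgEquiv.refl ι.symm).trans
      (MvPolynomial.algebraTensorAlgEquiv R P.ResidueField)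
    exact e1.toMulEquiv.isDomain _
  have hpure : ∀ (I : Ideal R) (b : B), algebraMap B A b ∈ I.map (algebraMap R A) →
      b ∈ I.map (algebraMap R B) := by
    apply aux_pure R B A (IsScalarTower.toAlgHom R B A)
    intro P _ x y hxy
    obtain ⟨e, he⟩ := fibers_equiv h P
    apply Polynomial.C_injective
    rw [← he, ← he]
    exact congrArg e hxy
  let D : ∀ (P : Ideal R) [P.IsPrime], FData R B A (P.ResidueField ⊗[R] B) P := fun P _ =>
    haveI := hdom P
    mkFData P (fibers_equiv h P).choose (fibers_equiv h P).choose_spec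
  have := hdom ⊥
  obtain ⟨F, hF⟩ := core (D ⊥) hfin ((MvPolynomial.aeval fun _ => (0 : R)).comp ι.symm.toAlgHom)
    hpure (by
      intro p hp a
      have : (Ideal.span {p}).IsPrime := (Ideal.span_singleton_prime hp.ne_zero).2 hp
      have := hdom (Ideal.span {p})
      by_cases h0 : ((D (Ideal.span {p})).Φ a).natDegree = 0
      · exact Or.inl ((D (Ideal.span {p})).dich hpure a h0)
      · exact Or.inr (fun f hf n => (D (Ideal.span {p})).trans a h0 f hf n))
  exact ⟨(AlgEquiv.ofBijective _ hF).symm⟩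

theorem backward_fibers (R B A : Type*) [CommRing R] [CommRing B] [CommRing A] [Algebra R B]
    [Algebra R A] [Algebra B A] [IsScalarTower R B A] (e : A ≃ₐ[B] B[X]) :
    FibersPolynomialOver R B A 1 := by
  intro P hP
  letI : Algebra (ResidueFieldAt R P ⊗[R] B) (ResidueFieldAt R P ⊗[R] A) :=
      (Algebra.TensorProduct.map (AlgHom.id R (ResidueFieldAt R P))
        (IsScalarTower.toAlgHom R B A)).toRingHom.toAlgebra
  let κ := ResidueFieldAt R P
  let e1 : A ≃ₐ[B] MvPolynomial (Fin 1) B := e.trans (MvPolynomial.uniqueAlgEquiv B (Fin 1)).symm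
  let e2 : κ ⊗[R] A ≃ₐ[R] κ ⊗[R] MvPolynomial (Fin 1) B :=
    Algebra.TensorProduct.congr AlgEquiv.refl (e1.restrictScalars R)
  let e3 : κ ⊗[R] MvPolynomial (Fin 1) B ≃ₐ[κ] MvPolynomial (Fin 1) (κ ⊗[R] B) :=
    MvPolynomial.rTensorAlgEquiv
  refine ⟨AlgEquiv.ofRingEquiv (f := e2.toRingEquiv.trans e3.toRingEquiv) ?_⟩
  intro u
  change e3 (e2 (Algebra.TensorProduct.map (AlgHom.id R (ResidueFieldAt R P))
        (IsScalarTower.toAlgHom R B A) u)) = MvPolynomial.C u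
  induction u using TensorProduct.induction_on with
  | zero => simp
  | add x y hx hy => rw [map_add, map_add, map_add, map_add, hx, hy]
  | tmul k b =>
    have : e2 (Algebra.TensorProduct.map (AlgHom.id R (ResidueFieldAt R P))
        (IsScalarTower.toAlgHom R B A) (k ⊗ₜ b)) = k ⊗ₜ[R] (MvPolynomial.C b) := by
      rw [Algebra.TensorProduct.map_tmul]
      change k ⊗ₜ[R] (e1 (algebraMap B A b)) = _
      rw [e1.commutes]; rfl
    rw [this]
    ext d
    rw [MvPolynomial.coeff_rTensorAlgEquiv_tmul, MvPolynomial.coeff_C, MvPolynomial.coeff_C]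
    split_ifs <;> simp

theorem polyEquiv (R B : Type*) [CommRing R] [CommRing B] [Algebra R B] (m : ℕ)
    (ι : MvPolynomial (Fin m) R ≃ₐ[R] B) :
    Nonempty (B[X] ≃ₐ[R] MvPolynomial (Fin (m + 1)) R) :=
  ⟨((MvPolynomial.finSuccEquiv R m).trans (Polynomial.mapAlgEquiv ι)).symm⟩

theorem surj_endo_inj {S : Type*} [CommRing S] [IsNoetherianRing S] (f : S →+* S)
    (hf : Function.Surjective f) : Function.Injective f := by
  let K : ℕ →o Ideal S := ⟨fun n => RingHom.ker (f ^ n), monotone_nat_of_le_succ (by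
    intro n x hx
    rw [RingHom.mem_ker, RingHom.coe_pow] at hx ⊢
    rw [Function.iterate_succ_apply', hx, map_zero])⟩
  obtain ⟨n, hn⟩ := monotone_stabilizes_iff_noetherian.2 ‹IsNoetherianRing S› K
  rw [injective_iff_map_eq_zero]
  intro x hx
  obtain ⟨y, rfl⟩ := hf.iterate n x
  have h1 : y ∈ K (n + 1) := by
    change y ∈ RingHom.ker (f ^ (n + 1))
    rw [RingHom.mem_ker, RingHom.coe_pow, Function.iterate_succ_apply', hx]
  rw [← hn (n + 1) (Nat.le_succ n)] at h1
  change y ∈ RingHom.ker (f ^ n) at h1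
  rwa [RingHom.mem_ker, RingHom.coe_pow] at h1

theorem backward_indep (R A : Type*) [CommRing R] [IsNoetherianRing R] [CommRing A] [Algebra R A]
    (m : ℕ) (W : Fin m → A) (e : A ≃ₐ[Algebra.adjoin R (Set.range W)]
          Polynomial (Algebra.adjoin R (Set.range W)))
    (e' : A ≃ₐ[R] MvPolynomial (Fin (m + 1)) R) : AlgebraicIndependent R W := by
  let t : A := e.symm X
  let V : Fin (m + 1) → A := Fin.cons t W
  let φ : MvPolynomial (Fin (m + 1)) R →ₐ[R] A := MvPolynomial.aeval V
  have hφ : Function.Surjective φ := by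
    rw [← AlgHom.range_eq_top]
    have hr : φ.range = Algebra.adjoin R (Set.range V) :=
      (Algebra.adjoin_range_eq_range_aeval R V).symm
    have hW : Algebra.adjoin R (Set.range W) ≤ φ.range := by
      rw [hr]; apply Algebra.adjoin_mono
      rintro _ ⟨i, rfl⟩
      exact ⟨i.succ, by simp [V]⟩
    have ht : t ∈ φ.range := by
      rw [hr]; exact Algebra.subset_adjoin ⟨0, by simp [V]⟩
    rw [eq_top_iff]
    rintro a -
    obtain ⟨f, rfl⟩ := e.symm.surjective a
    induction f using Polynomial.induction_on' with
    | add p q hp hq => rw [map_add]; exact add_mem hp hq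
    | monomial n b =>
      rw [← Polynomial.C_mul_X_pow_eq_monomial, map_mul, map_pow]
      refine mul_mem ?_ (pow_mem ht n)
      have : e.symm (Polynomial.C b) = (b : A) := e.symm.commutes b
      rw [this]
      exact hW b.2
  have hinj : Function.Injective φ := by
    have := surj_endo_inj
      ((e'.toAlgHom.comp φ).toRingHom) (e'.surjective.comp hφ)
    exact Function.Injective.of_comp this
  have hV : AlgebraicIndependent R V := hinj
  have := hV.comp Fin.succ (Fin.succ_injective m)
  have h2 : V ∘ Fin.succ = W := by ext i; simp [V]
  rwa [h2] at this

end helpers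

/-- Let `R` be a Noetherian factorial domain and `A` an `𝔸^{m+1}`-fibration over `R`.
An `m`-tuple `W` of elements of `A` is an `m`-tuple residual variable of `A` over `R`
if and only if `A = R[W]^[1]` as an `R[W]`-algebra (and hence `A = R^[m+1]`). -/
theorem residualVariable_iff_polynomial_of_ufd
    (R A : Type*) [CommRing R] [IsDomain R] [IsNoetherianRing R]
    [UniqueFactorizationMonoid R] [CommRing A] [Algebra R A]
    (m : ℕ) (hA : IsAffineFibration R A (m + 1)) (W : Fin m → A) :
    IsResidualVariable R A (m + 1) m W ↔
      (Nonempty (A ≃ₐ[↥(Algebra.adjoin R (Set.range W))]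
          Polynomial ↥(Algebra.adjoin R (Set.range W))) ∧
        Nonempty (A ≃ₐ[R] MvPolynomial (Fin (m + 1)) R)) := by
  obtain ⟨hfin, hflat, -⟩ := hA
  have hm : m + 1 - m = 1 := by omega
  unfold IsResidualVariable
  rw [hm]
  constructor
  · rintro ⟨hW, hfib⟩
    let ι := hW.aevalEquiv
    obtain ⟨e⟩ := forward R (Algebra.adjoin R (Set.range W)) A hfin ι hfib
    obtain ⟨e2⟩ := polyEquiv R (Algebra.adjoin R (Set.range W)) m ι
    exact ⟨⟨e⟩, ⟨(e.restrictScalars R).trans e2⟩⟩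
  · rintro ⟨⟨e⟩, ⟨e'⟩⟩
    exact ⟨backward_indep R A m W e e', backward_fibers R _ A e⟩
end
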